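/- Let t ≥ m ≥ 1 be integers, let q ∈ ℂ with 0 < |q| < 1, and let x ∈ ℂ with x ≠ 0 and x·q^n ≠ 1 for every nonzero integer n. Then q^{-t} Σ_{k_t ≥ … ≥ k_1 ≥ 0, k_m ≥ 1} (xq;q)_{k_t-1} (q/x;q)_{k_t-1} q^{k_t} Π_{i=1}^{t-1} q^{k_i^2} [ k_{i+1} - k_i - i + Σ_{j=1}^{i} (2 k_j + χ(m > j)) choose k_{i+1} - k_i ]_q = -q^{-t/2 - m/2 + 3/8} · ((xq;q)_∞ (q/x;q)_∞ / ((q;q)_∞)^2) · ( Σ_{r,s ≥ 0, r ≢ s (mod 2)} - Σ_{r,s < 0, r ≢ s (mod 2)} ) (-1)^{(r-s-1)/2} q^{r^2/8 + (4t+3)rs/4 + s^2/8 + (1+m+t)r/2 + (1-m+t)s/2} / (1 - x q^{(r+s+1)/2}), where each of the series converges absolutely. Note that for integers r ≢ s (mod 2), the quantities (r-s-1)/2 and (r+s+1)/2 are integers, and the total exponent of q in each term (including the prefactor exponent -t/2 - m/2 + 3/8) is an integer. -/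

import Mathlib

open Finset

/-- The finite q-Pochhammer symbol `(a;q)_n`. -/
noncomputable def qPoch (q a : ℂ) (n : ℕ) : ℂ := ∏ j ∈ Finset.range n, (1 - a * q ^ j)

/-- The infinite q-Pochhammer symbol `(a;q)_∞`. -/
noncomputable def qPochInf (q a : ℂ) : ℂ := ∏' j : ℕ, (1 - a * q ^ j)

/-- The Gaussian binomial coefficient `[n choose k]_q`, zero outside `0 ≤ k ≤ n`. -/
noncomputable def qBinom (q : ℂ) (n k : ℤ) : ℂ :=
  if 0 ≤ k ∧ k ≤ n then
    ∏ j ∈ Finset.range k.toNat, (1 - q ^ (n - k + (j : ℤ) + 1)) / (1 - q ^ ((j : ℤ) + 1))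
  else 0

/-- The product
`Π_{i=1}^{T-1} q^{k_i²} [k_{i+1} - k_i - i + Σ_{j=1}^{i}(2k_j + χ(M>j)) choose k_{i+1}-k_i]_q`
of the vector-valued U-function, for tuples of length `t+1`; the paper's `t, m`
are `t+1, m+1`, so `χ(M > j)` (paper `j`) becomes `χ(j < m)` for 0-based `j`. -/
noncomputable def UtProdM (q : ℂ) (t m : ℕ) (K : Fin (t+1) → ℕ) : ℂ :=
  ∏ i : Fin t, (q ^ (K i.castSucc ^ 2) *
    qBinom q ((K i.succ : ℤ) - (K i.castSucc : ℤ) - ((i : ℕ) + 1)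
        + ∑ j ∈ Finset.univ.filter (fun j : Fin (t+1) => (j : ℕ) ≤ (i : ℕ)),
            (2 * (K j : ℤ) + if (j : ℕ) < m then 1 else 0))
      ((K i.succ : ℤ) - (K i.castSucc : ℤ)))

/-- The summand of the multisum defining `U_t^{(m)}(-x;q)`. -/
noncomputable def UtTermM (q x : ℂ) (t m : ℕ) (K : Fin (t+1) → ℕ) : ℂ :=
  qPoch q (x * q) (K (Fin.last t) - 1) * qPoch q (q / x) (K (Fin.last t) - 1) *
    q ^ (K (Fin.last t)) * UtProdM q t m K

/-- The Hecke-type summand `(-1)^{(r-s-1)/2} q^{E} / (1 - x q^{(r+s+1)/2})` where the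
integer exponent `E = r²/8 + (4T+3)rs/4 + s²/8 + (1+M+T)r/2 + (1-M+T)s/2 - T/2 - M/2 + 3/8`
(the prefactor exponent `-T/2 - M/2 + 3/8` has been absorbed, making the total
exponent of `q` an integer, as noted in the statement); `T, M` are the paper's `t, m`. -/
noncomputable def heckeTermM (q x : ℂ) (T M : ℤ) (p : ℤ × ℤ) : ℂ :=
  (-1 : ℂ) ^ ((p.1 - p.2 - 1) / 2) *
    q ^ ((p.1 ^ 2 + p.2 ^ 2 + 2 * (4 * T + 3) * p.1 * p.2
          + 4 * (1 + M + T) * p.1 + 4 * (1 - M + T) * p.2 - 4 * T - 4 * M + 3) / 8) /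
    (1 - x * q ^ ((p.1 + p.2 + 1) / 2))

/-!
Expanding each Gaussian binomial coefficient through its generating function turns the sum over
`k_1 ≤ ⋯ ≤ k_{t-1}` with `k_t = n ≥ 1` fixed into the `n`-th coefficient of a power series on which
Bailey steps act: `m - 1` steps relative to `a = 1` and `t - m` steps relative to `a = q` carry a
Gaussian bilateral sequence to the unit Bailey pair, and the constraint `k_m ≥ 1` subtracts one
explicit term. Replacing `β_n` by `∑ j ≤ n, q^j β_j` changes the lattice on the `α`-side and
produces the indefinite quadratic form: the inner sum equals
`∑ j ≥ 1, c_j (q^j - q^(-j)) / ((q;q)_{n-j} (q;q)_{n+j})` with `c_j` a finite sum of monomials.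
The sum over `n` against `δ_n = (xq;q)_{n-1} (q/x;q)_{n-1} q^n` then telescopes to the infinite
products times `q^j / ((1 - x q^j)(1 - q^j / x))`, whose two partial fractions are the two
quadrants of the Hecke-type sum in the coordinates `j = ±(r + s + 1) / 2` and `(r - s - 1) / 2`.
-/

section InvQPoch

variable {q : ℂ}

theorem one_sub_pow_ne_zero_of_not_isOfFinOrder (hq : ¬ IsOfFinOrder q) {n : ℕ} (hn : 0 < n) :
    1 - q ^ n ≠ 0 :=
  fun h ↦ hq <| isOfFinOrder_iff_pow_eq_one.2 ⟨n, hn, (sub_eq_zero.1 h).symm⟩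

theorem qPoch_succ (q a : ℂ) (n : ℕ) : qPoch q a (n + 1) = qPoch q a n * (1 - a * q ^ n) :=
  prod_range_succ _ _

theorem qPoch_succ' (q a : ℂ) (n : ℕ) : qPoch q a (n + 1) = (1 - a) * qPoch q (a * q) n := by
  simp only [qPoch, prod_range_succ', pow_zero, mul_one, pow_succ', mul_assoc]
  ring

theorem qPoch_self_ne_zero (hq : ¬ IsOfFinOrder q) (n : ℕ) : qPoch q q n ≠ 0 :=
  prod_ne_zero_iff.2 fun j _ ↦ by
    rw [← pow_succ']
    exact one_sub_pow_ne_zero_of_not_isOfFinOrder hq j.succ_pos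

/-- The reciprocal `1/(q;q)_z`, extended to negative integers by zero so that
`invQPoch_sub_one` holds for every integer. -/
noncomputable def invQPoch (q : ℂ) (z : ℤ) : ℂ := if 0 ≤ z then (qPoch q q z.toNat)⁻¹ else 0

theorem invQPoch_of_neg (q : ℂ) {z : ℤ} (hz : z < 0) : invQPoch q z = 0 := if_neg hz.not_ge

theorem invQPoch_natCast (q : ℂ) (n : ℕ) : invQPoch q n = (qPoch q q n)⁻¹ := by simp [invQPoch]

theorem invQPoch_zero (q : ℂ) : invQPoch q 0 = 1 := by simp [invQPoch, qPoch]

theorem invQPoch_sub_one (hq : ¬ IsOfFinOrder q) (z : ℤ) :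
    invQPoch q (z - 1) = (1 - q ^ z) * invQPoch q z := by
  obtain hz | rfl | hz := lt_trichotomy z 0
  · simp [invQPoch_of_neg q hz, invQPoch_of_neg q (show z - 1 < 0 by omega)]
  · simp [invQPoch_of_neg q neg_one_lt_zero]
  · obtain ⟨n, rfl⟩ : ∃ n : ℕ, z = (n + 1 : ℕ) := ⟨(z - 1).toNat, by omega⟩
    have hn := qPoch_self_ne_zero hq (n + 1)
    rw [show ((n + 1 : ℕ) : ℤ) - 1 = n by omega, invQPoch_natCast, invQPoch_natCast, zpow_natCast]
    rw [qPoch_succ, ← pow_succ'] at *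
    have := left_ne_zero_of_mul hn
    have := right_ne_zero_of_mul hn
    field_simp

theorem invQPoch_eq_mul_succ (hq : ¬ IsOfFinOrder q) (n : ℕ) :
    invQPoch q n = (1 - q ^ (n + 1)) * invQPoch q (n + 1 : ℕ) := by
  have := invQPoch_sub_one hq (n + 1 : ℕ)
  rwa [show ((n + 1 : ℕ) : ℤ) - 1 = n by omega, zpow_natCast] at this

/-- The Gaussian binomial coefficient `[i + s - 1 choose i]_q = (q^s;q)_i / (q;q)_i`, written so
that it makes sense for `s = 0` as well. -/
noncomputable def qMultichoose (q : ℂ) (i s : ℕ) : ℂ := qPoch q (q ^ s) i * invQPoch q i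

theorem qMultichoose_zero_left (q : ℂ) (s : ℕ) : qMultichoose q 0 s = 1 := by
  simp [qMultichoose, qPoch, invQPoch_zero]

theorem qMultichoose_succ_zero (q : ℂ) (i : ℕ) : qMultichoose q (i + 1) 0 = 0 := by
  simp [qMultichoose, qPoch_succ']

theorem qMultichoose_one_right (hq : ¬ IsOfFinOrder q) (i : ℕ) : qMultichoose q i 1 = 1 := by
  rw [qMultichoose, pow_one, invQPoch_natCast, mul_inv_cancel₀ (qPoch_self_ne_zero hq i)]

theorem qMultichoose_succ_succ (hq : ¬ IsOfFinOrder q) (i s : ℕ) :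
    qMultichoose q (i + 1) (s + 1) =
      qMultichoose q (i + 1) s + q ^ s * qMultichoose q i (s + 1) := by
  simp only [qMultichoose, invQPoch_eq_mul_succ hq i]
  rw [qPoch_succ, qPoch_succ' q (q ^ s), ← pow_succ]
  ring

end InvQPoch

section PowerSeries

open PowerSeries

variable {q : ℂ}

/-- The generating function `∑ Xⁿ / (q;q)_n`, that is, `1/(X;q)_∞`. -/
noncomputable def invQPochSeries (q : ℂ) : ℂ⟦X⟧ := mk fun n ↦ invQPoch q n

/-- The generating function of `[n + s - 1 choose n]_q` in `n`, that is, `1/(X;q)_s`. -/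
noncomputable def qMultichooseSeries (q : ℂ) (s : ℕ) : ℂ⟦X⟧ := mk fun n ↦ qMultichoose q n s

theorem qMultichooseSeries_zero (q : ℂ) : qMultichooseSeries q 0 = 1 := by
  ext (_ | n)
  · simp [qMultichooseSeries, qMultichoose_zero_left]
  · simp [qMultichooseSeries, qMultichoose_succ_zero, coeff_one]

theorem qMultichooseSeries_succ_mul (hq : ¬ IsOfFinOrder q) (s : ℕ) :
    qMultichooseSeries q (s + 1) * (1 - C (q ^ s) * X) = qMultichooseSeries q s := by
  rw [mul_one_sub, mul_comm, mul_assoc]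
  ext (_ | n)
  · simp [qMultichooseSeries, qMultichoose_zero_left]
  · rw [map_sub, coeff_C_mul, coeff_succ_X_mul]
    simp only [qMultichooseSeries, coeff_mk, qMultichoose_succ_succ hq, add_sub_cancel_right]

theorem rescale_pow_succ_invQPochSeries (hq : ¬ IsOfFinOrder q) (s : ℕ) :
    rescale (q ^ (s + 1)) (invQPochSeries q) =
      (1 - C (q ^ s) * X) * rescale (q ^ s) (invQPochSeries q) := by
  rw [one_sub_mul, mul_assoc]
  ext (_ | n)
  · simp only [map_sub, coeff_C_mul, coeff_zero_X_mul, coeff_rescale, pow_zero, one_mul, mul_zero,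
      sub_zero]
  · rw [map_sub, coeff_C_mul, coeff_succ_X_mul]
    simp only [invQPochSeries, coeff_rescale, coeff_mk, invQPoch_eq_mul_succ hq n]
    ring

theorem qMultichooseSeries_mul_rescale_invQPochSeries (hq : ¬ IsOfFinOrder q) (s : ℕ) :
    qMultichooseSeries q s * rescale (q ^ s) (invQPochSeries q) = invQPochSeries q := by
  induction s with
  | zero => rw [qMultichooseSeries_zero, pow_zero, rescale_one, one_mul, RingHom.id_apply]
  | succ s ih =>
    rw [rescale_pow_succ_invQPochSeries hq, ← mul_assoc, qMultichooseSeries_succ_mul hq, ih]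

/-- The diagonal operator `Xⁿ ↦ q^(n² + ε n) Xⁿ` on power series. -/
noncomputable def gaussTwist (q : ℂ) (ε : ℕ) : ℂ⟦X⟧ →ₗ[ℂ] ℂ⟦X⟧ where
  toFun f := mk fun n ↦ q ^ (n ^ 2 + ε * n) * coeff n f
  map_add' f g := by ext; simp [mul_add]
  map_smul' c f := by ext; simp [mul_left_comm]

theorem coeff_gaussTwist (q : ℂ) (ε : ℕ) (f : ℂ⟦X⟧) (n : ℕ) :
    coeff n (gaussTwist q ε f) = q ^ (n ^ 2 + ε * n) * coeff n f := by
  simp [gaussTwist]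

/-- One step of the Bailey chain relative to `a = q^ε`, acting on the generating function of
the sequence `β`: it replaces `β_n` by `∑ k, q^(k² + ε k) β_k / (q;q)_{n-k}`. -/
noncomputable def baileyStep (q : ℂ) (ε : ℕ) : ℂ⟦X⟧ →ₗ[ℂ] ℂ⟦X⟧ :=
  LinearMap.mulLeft ℂ (invQPochSeries q) ∘ₗ gaussTwist q ε

theorem baileyStep_apply (q : ℂ) (ε : ℕ) (f : ℂ⟦X⟧) :
    baileyStep q ε f = invQPochSeries q * gaussTwist q ε f := rfl

/-- The operator `f(X) ↦ f(q^s X) / (X;q)_s` on power series, which interpolates between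
multiplication by Gaussian binomial coefficients and the Bailey chain. -/
noncomputable def qDilation (q : ℂ) (s : ℕ) (f : ℂ⟦X⟧) : ℂ⟦X⟧ :=
  qMultichooseSeries q s * rescale (q ^ s) f

theorem qDilation_zero (q : ℂ) (f : ℂ⟦X⟧) : qDilation q 0 f = f := by
  simp [qDilation, qMultichooseSeries_zero, rescale_one]

theorem qDilation_one (q : ℂ) (s : ℕ) : qDilation q s 1 = qMultichooseSeries q s := by
  simp [qDilation]

theorem coeff_qDilation_one (hq : ¬ IsOfFinOrder q) (f : ℂ⟦X⟧) (n : ℕ) :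
    coeff n (qDilation q 1 f) = ∑ j ∈ range (n + 1), q ^ j * coeff j f := by
  rw [qDilation, mul_comm, coeff_mul, Nat.sum_antidiagonal_eq_sum_range_succ_mk]
  simp [qMultichooseSeries, qMultichoose_one_right hq, coeff_rescale]

theorem qDilation_baileyStep (hq : ¬ IsOfFinOrder q) (s ε : ℕ) (f : ℂ⟦X⟧) :
    qDilation q s (baileyStep q ε f) = invQPochSeries q * rescale (q ^ s) (gaussTwist q ε f) := by
  rw [qDilation, baileyStep_apply, map_mul, ← mul_assoc,
    qMultichooseSeries_mul_rescale_invQPochSeries hq]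

theorem coeff_baileyStep (q : ℂ) (ε n : ℕ) (f : ℂ⟦X⟧) :
    coeff n (baileyStep q ε f) =
      ∑ k ∈ range (n + 1), invQPoch q (n - k) * q ^ (k ^ 2 + ε * k) * coeff k f := by
  rw [baileyStep_apply, mul_comm, coeff_mul, Nat.sum_antidiagonal_eq_sum_range_succ_mk]
  refine sum_congr rfl fun k hk ↦ ?_
  rw [coeff_gaussTwist, invQPochSeries, coeff_mk, Nat.cast_sub (mem_range_succ_iff.1 hk)]
  ring

theorem gaussTwist_X_pow_mul_rescale (q : ℂ) {ε s : ℕ} (hs : ε ≤ s) (k : ℕ) (f : ℂ⟦X⟧) :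
    gaussTwist q 0 (X ^ k * rescale (q ^ s) f) =
      q ^ k ^ 2 • (X ^ k * rescale (q ^ (2 * k + s - ε)) (gaussTwist q ε f)) := by
  ext n
  simp only [coeff_gaussTwist, coeff_smul, smul_eq_mul, coeff_X_pow_mul', coeff_rescale]
  split_ifs with hkn
  · obtain ⟨j, rfl⟩ := Nat.exists_eq_add_of_le hkn
    obtain ⟨u, rfl⟩ := Nat.exists_eq_add_of_le hs
    rw [Nat.add_sub_cancel_left, show 2 * k + (ε + u) - ε = 2 * k + u by omega]
    ring
  · simp

theorem baileyStep_X_pow_mul_rescale (hq : ¬ IsOfFinOrder q) {ε s : ℕ} (hs : ε ≤ s) (k : ℕ)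
    (f : ℂ⟦X⟧) :
    baileyStep q 0 (X ^ k * rescale (q ^ s) f) =
      q ^ k ^ 2 • (X ^ k * qDilation q (2 * k + s - ε) (baileyStep q ε f)) := by
  rw [qDilation_baileyStep hq, baileyStep_apply, gaussTwist_X_pow_mul_rescale q hs,
    mul_smul_comm, mul_left_comm]

theorem coeff_baileyStep_eq_zero_of_X_pow_dvd (q : ℂ) (ε : ℕ) {f : ℂ⟦X⟧} {N n : ℕ}
    (hf : X ^ N ∣ f) (hn : n < N) : coeff n (baileyStep q ε f) = 0 := by
  rw [coeff_baileyStep]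
  refine sum_eq_zero fun k hk ↦ ?_
  rw [X_pow_dvd_iff.1 hf k ((mem_range_succ_iff.1 hk).trans_lt hn), mul_zero]

theorem coeff_baileyStep_mul (q : ℂ) (ε : ℕ) (A f : ℂ⟦X⟧) {M n : ℕ} (hn : n ≤ M) :
    coeff n (baileyStep q ε (A * f)) =
      ∑ k ∈ range (M + 1), coeff k A * coeff n (baileyStep q ε (X ^ k * f)) := by
  have htrunc : A = (∑ k ∈ range (M + 1), coeff k A • (X ^ k : ℂ⟦X⟧)) +
      (A - ∑ k ∈ range (M + 1), coeff k A • (X ^ k : ℂ⟦X⟧)) := (add_sub_cancel _ _).symm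
  have hdvd : X ^ (M + 1) ∣ A - ∑ k ∈ range (M + 1), coeff k A • (X ^ k : ℂ⟦X⟧) := by
    refine X_pow_dvd_iff.2 fun k hk ↦ ?_
    simp [coeff_X_pow, Nat.le_of_lt_succ hk]
  conv_lhs => rw [htrunc, add_mul, map_add, map_add, coeff_baileyStep_eq_zero_of_X_pow_dvd q ε
    (hdvd.mul_right f) (Nat.lt_succ_of_le hn), add_zero, sum_mul, map_sum, map_sum]
  simp only [smul_mul_assoc, map_smul, smul_eq_mul]

theorem coeff_baileyStep_X_pow_mul_qDilation (hq : ¬ IsOfFinOrder q) {ε s : ℕ} (hs : ε ≤ s)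
    (l : ℕ) (f : ℂ⟦X⟧) {M n : ℕ} (hn : n ≤ M) :
    coeff n (baileyStep q 0 (X ^ l * qDilation q s f)) =
      ∑ k ∈ range (M + 1), coeff k (X ^ l * qMultichooseSeries q s) * q ^ k ^ 2 *
        coeff n (X ^ k * qDilation q (2 * k + s - ε) (baileyStep q ε f)) := by
  rw [qDilation, ← mul_assoc, coeff_baileyStep_mul q 0 _ _ hn]
  simp only [baileyStep_X_pow_mul_rescale hq hs, coeff_smul, smul_eq_mul, mul_assoc]

end PowerSeries

section NestedSum

open PowerSeries

variable {q : ℂ}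

/-- The lower parameter of the Gaussian binomial coefficient joining `k_i` to `k_{i+1}`
(0-based `k_i`): the coefficient is `[k_{i+1} - k_i + s - 1 choose k_{i+1} - k_i]_q` with
`s = multichooseParam m i S` and `S` the sum of all `k_j` with `j < i + 1`. -/
def multichooseParam (m i S : ℕ) : ℕ := 2 * S + 1 - (i - m)

/-- The Gaussian binomial coefficient joining an entry `l` to the next entry `k`, the `i`-th one,
of the tuples summed over, when the entries before `k` sum to `S`. It vanishes unless `l ≤ k`,
and encodes the constraint that the `m`-th entry is positive. -/
noncomputable def stepWeight (q : ℂ) (m i l S k : ℕ) : ℂ :=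
  if i = m ∧ k = 0 then 0 else coeff k (X ^ l * qMultichooseSeries q (multichooseParam m i S))

/-- Summation over the `i`-th entry `k ≤ M` of a tuple whose previous entry is `l` and whose
previous entries sum to `S`. -/
noncomputable def nestedStep (q : ℂ) (m M i : ℕ) : (ℕ → ℕ → ℂ) →ₗ[ℂ] (ℕ → ℕ → ℂ) where
  toFun h l S := ∑ k ∈ range (M + 1), stepWeight q m i l S k * q ^ k ^ 2 * h k (S + k)
  map_add' h h' := by ext; simp [mul_add, sum_add_distrib]
  map_smul' c h := by ext; simp [mul_sum, mul_left_comm]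

/-- The weighted sum of `h k_{i-1} (k_0 + ⋯ + k_{i-1})` over the tuples `k_0 ≤ ⋯ ≤ k_{i-1} ≤ M`. -/
noncomputable def nestedSum (q : ℂ) (m M : ℕ) : ℕ → (ℕ → ℕ → ℂ) →ₗ[ℂ] ℂ
  | 0 => LinearMap.proj 0 ∘ₗ LinearMap.proj 0
  | i + 1 => nestedSum q m M i ∘ₗ nestedStep q m M i

theorem nestedStep_apply (q : ℂ) (m M i : ℕ) (h : ℕ → ℕ → ℂ) (l S : ℕ) :
    nestedStep q m M i h l S =
      ∑ k ∈ range (M + 1), stepWeight q m i l S k * q ^ k ^ 2 * h k (S + k) := rfl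

theorem nestedSum_zero (q : ℂ) (m M : ℕ) (h : ℕ → ℕ → ℂ) : nestedSum q m M 0 h = h 0 0 := rfl

theorem nestedSum_succ (q : ℂ) (m M i : ℕ) (h : ℕ → ℕ → ℂ) :
    nestedSum q m M (i + 1) h = nestedSum q m M i (nestedStep q m M i h) := rfl

theorem stepWeight_of_lt (q : ℂ) (m i S : ℕ) {l k : ℕ} (hkl : k < l) :
    stepWeight q m i l S k = 0 := by
  simp [stepWeight, coeff_X_pow_mul', hkl.not_ge]

theorem stepWeight_self_zero (q : ℂ) (m l S : ℕ) : stepWeight q m m l S 0 = 0 := by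
  simp [stepWeight]

theorem stepWeight_of_ne (q : ℂ) {m i k : ℕ} (h : i = m → k ≠ 0) (l S : ℕ) :
    stepWeight q m i l S k =
      coeff k (X ^ l * qMultichooseSeries q (multichooseParam m i S)) :=
  if_neg fun hk ↦ h hk.1 hk.2

theorem nestedSum_congr (q : ℂ) (m M : ℕ) {i : ℕ} {h h' : ℕ → ℕ → ℂ}
    (hh : ∀ l S, (m < i → i - m ≤ S ∧ 1 ≤ l) → h l S = h' l S) :
    nestedSum q m M i h = nestedSum q m M i h' := by
  induction i generalizing h h' with
  | zero => exact hh 0 0 (by omega)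
  | succ i ih =>
    refine ih fun l S hlS ↦ ?_
    simp only [nestedStep_apply]
    refine sum_congr rfl fun k _ ↦ ?_
    by_cases hk : m < i + 1 → i + 1 - m ≤ S + k ∧ 1 ≤ k
    · rw [hh k (S + k) hk]
    · obtain hkl | ⟨rfl, rfl⟩ : k < l ∨ i = m ∧ k = 0 := by omega
      · simp [stepWeight_of_lt q m i S hkl]
      · simp [stepWeight_self_zero]

theorem nestedSum_ite_eq_zero (q : ℂ) {m i : ℕ} (M : ℕ) (hi : i ≤ m) (u : ℕ → ℂ) :
    nestedSum q m M i (fun l S ↦ if l = 0 then u S else 0) = u 0 := by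
  induction i with
  | zero => simp [nestedSum_zero]
  | succ i ih =>
    rw [nestedSum_succ, ← ih (by omega)]
    congr 1
    ext l S
    rw [nestedStep_apply, sum_eq_single_of_mem 0 (by simp) fun k _ hk ↦ by simp [hk],
      stepWeight_of_ne q (by omega), coeff_X_pow_mul']
    by_cases hl : l = 0
    · simp [hl, qMultichooseSeries, qMultichoose_zero_left]
    · simp [hl]

/-- The nested sums of length `i` turn the coefficients of the dilations of `g` into the
coefficients of `F`, up to degree `M`. -/
def IsNestedImage (q : ℂ) (m M i : ℕ) (g F : ℂ⟦X⟧) : Prop :=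
  ∀ n ≤ M, nestedSum q m M i
    (fun l S ↦ coeff n (X ^ l * qDilation q (multichooseParam m i S) g)) = coeff n F

namespace IsNestedImage

variable {m M i : ℕ} {g F : ℂ⟦X⟧}

theorem zero (q : ℂ) (m M : ℕ) (f : ℂ⟦X⟧) : IsNestedImage q m M 0 f (qDilation q 1 f) :=
  fun n _ ↦ by simp [nestedSum_zero, multichooseParam]

theorem nestedSum_baileyStep (h : IsNestedImage q m M i g F) {n : ℕ} (hn : n ≤ M) :
    nestedSum q m M i
        (fun l S ↦ coeff n (baileyStep q 0 (X ^ l * qDilation q (multichooseParam m i S) g))) =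
      coeff n (baileyStep q 0 F) := by
  have hsum : (fun l S ↦
        coeff n (baileyStep q 0 (X ^ l * qDilation q (multichooseParam m i S) g))) =
      ∑ k ∈ range (n + 1), (invQPoch q (n - k) * q ^ (k ^ 2 + 0 * k)) •
        fun l S ↦ coeff k (X ^ l * qDilation q (multichooseParam m i S) g) := by
    ext l S
    simp [coeff_baileyStep]
  rw [hsum, map_sum, coeff_baileyStep]
  refine sum_congr rfl fun k hk ↦ ?_
  rw [map_smul, smul_eq_mul, h k (by have := mem_range_succ_iff.1 hk; omega)]

theorem succ (hq : ¬ IsOfFinOrder q) (h : IsNestedImage q m M i g F) {ε : ℕ}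
    (hε : i < m ∧ ε = 0 ∨ m < i ∧ ε = 1) :
    IsNestedImage q m M (i + 1) (baileyStep q ε g) (baileyStep q 0 F) := by
  intro n hn
  rw [← h.nestedSum_baileyStep hn, nestedSum_succ]
  refine nestedSum_congr q m M fun l S hS ↦ ?_
  rw [coeff_baileyStep_X_pow_mul_qDilation hq (ε := ε) (by unfold multichooseParam; omega) l g hn,
    nestedStep_apply]
  refine sum_congr rfl fun k _ ↦ ?_
  rw [stepWeight_of_ne q (by omega),
    show multichooseParam m (i + 1) (S + k) = 2 * k + multichooseParam m i S - ε by
      unfold multichooseParam; omega]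

/-- The constraint that the `m`-th entry is positive removes the term `k = 0`, whose contribution
is subtracted here. -/
theorem succ_self (hq : ¬ IsOfFinOrder q) (h : IsNestedImage q m M m g F) :
    IsNestedImage q m M (m + 1) (baileyStep q 1 g) (baileyStep q 0 F - baileyStep q 1 g) := by
  intro n hn
  have hzero : coeff n (baileyStep q 1 g) = nestedSum q m M m
      (fun l S ↦ if l = 0 then coeff n (qDilation q (2 * S) (baileyStep q 1 g)) else 0) := by
    rw [nestedSum_ite_eq_zero q M le_rfl, mul_zero, qDilation_zero]
  rw [map_sub, ← h.nestedSum_baileyStep hn, hzero, ← map_sub, nestedSum_succ]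
  refine nestedSum_congr q m M fun l S _ ↦ ?_
  have hparam (k : ℕ) :
      multichooseParam m (m + 1) (S + k) = 2 * k + multichooseParam m m S - 1 := by
    unfold multichooseParam; omega
  rw [Pi.sub_apply, Pi.sub_apply, nestedStep_apply, coeff_baileyStep_X_pow_mul_qDilation hq
    (ε := 1) (by unfold multichooseParam; omega) l g hn, sum_range_succ', sum_range_succ',
    stepWeight_self_zero]
  simp only [stepWeight_of_ne q (fun _ ↦ Nat.succ_ne_zero _), hparam, zero_mul, add_zero]
  rw [add_sub_assoc, left_eq_add, sub_eq_zero]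
  by_cases hl : l = 0
  · simp [hl, multichooseParam, qMultichooseSeries, qMultichoose_zero_left]
  · simp [hl, coeff_X_pow_mul']

theorem baileyStep_pow (hq : ¬ IsOfFinOrder q) (M : ℕ) (hi : i ≤ m) (f : ℂ⟦X⟧) :
    IsNestedImage q m M i ((baileyStep q 0 ^ i) f) ((baileyStep q 0 ^ i) (qDilation q 1 f)) := by
  induction i with
  | zero => exact zero q m M f
  | succ i ih =>
    simp only [pow_succ', Module.End.mul_apply]
    exact (ih (by omega)).succ hq (.inl ⟨hi, rfl⟩)

theorem baileyStep_pow_mul_pow (hq : ¬ IsOfFinOrder q) (m M j : ℕ) (f : ℂ⟦X⟧) :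
    IsNestedImage q m M (m + (j + 1)) ((baileyStep q 1 ^ (j + 1) * baileyStep q 0 ^ m) f)
      ((baileyStep q 0 ^ (m + (j + 1))) (qDilation q 1 f) -
        (baileyStep q 0 ^ j * baileyStep q 1 * baileyStep q 0 ^ m) f) := by
  induction j with
  | zero =>
    simpa [pow_succ'] using (baileyStep_pow hq M le_rfl f).succ_self hq
  | succ j ih =>
    have := ih.succ hq (.inr ⟨by omega, rfl⟩)
    rw [map_sub] at this
    simpa only [← Module.End.mul_apply, ← mul_assoc, ← pow_succ', ← add_assoc] using this

end IsNestedImage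

theorem nestedSum_stepWeight_of_isNestedImage_one {m i n : ℕ} {F : ℂ⟦X⟧}
    (h : IsNestedImage q m n i 1 F) (hn : n ≠ 0) :
    nestedSum q m n i (fun l S ↦ stepWeight q m i l S n) = coeff n F := by
  simp only [← h n le_rfl, qDilation_one, stepWeight_of_ne q fun _ ↦ hn]

end NestedSum

section BaileySeries

open PowerSeries

variable {q : ℂ}

theorem one_sub_pow_mul_invQPoch_mul (hq : ¬ IsOfFinOrder q) (c : ℕ) {n i : ℕ} (hi : i ≤ n + 1) :
    (1 - q ^ (n + 1)) * (invQPoch q ((n + 1 : ℕ) - i) * q ^ (i ^ 2 + c * i) *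
        (invQPoch q i * invQPoch q (i + c))) =
      invQPoch q (n - i) * q ^ (i ^ 2 + c * i + i) * (invQPoch q i * invQPoch q (i + c)) +
      invQPoch q ((n + 1 : ℕ) - i) * q ^ (i ^ 2 + c * i) *
        (invQPoch q (i - 1) * invQPoch q (i + c)) := by
  obtain ⟨d, hd⟩ := Nat.exists_eq_add_of_le hi
  rw [show (n : ℤ) - i = d - 1 by omega, show ((n + 1 : ℕ) : ℤ) - i = d by omega,
    invQPoch_sub_one hq d, invQPoch_sub_one hq i, hd, zpow_natCast, zpow_natCast]
  ring

theorem sum_invQPoch_mul_invQPoch (hq : ¬ IsOfFinOrder q) (n c : ℕ) :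
    ∑ i ∈ range (n + 1),
        invQPoch q (n - i) * q ^ (i ^ 2 + c * i) * (invQPoch q i * invQPoch q (i + c)) =
      invQPoch q n * invQPoch q (n + c) := by
  induction n generalizing c with
  | zero => simp [invQPoch_zero]
  | succ n ih =>
    refine mul_left_cancel₀ (one_sub_pow_ne_zero_of_not_isOfFinOrder hq n.succ_pos) ?_
    rw [mul_sum, sum_congr rfl fun i hi ↦ one_sub_pow_mul_invQPoch_mul hq c
        (mem_range_succ_iff.1 hi), sum_add_distrib, sum_range_succ,
      sum_range_succ' (fun i : ℕ ↦ _ * _ * (invQPoch q ((i : ℤ) - 1) * _)),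
      invQPoch_of_neg q (show (n : ℤ) - (n + 1 : ℕ) < 0 by omega),
      invQPoch_of_neg q (show ((0 : ℕ) : ℤ) - 1 < 0 by omega)]
    simp only [zero_mul, mul_zero, add_zero]
    have hrhs : (1 - q ^ (n + 1)) * (invQPoch q (n + 1 : ℕ) * invQPoch q ((n + 1 : ℕ) + c)) =
        invQPoch q n * invQPoch q (n + (c + 1 : ℕ)) := by
      rw [invQPoch_eq_mul_succ hq n]
      push_cast
      ring_nf
    rw [← sum_add_distrib, Nat.succ_eq_add_one, hrhs, ← ih (c + 1)]
    refine sum_congr rfl fun i _ ↦ ?_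
    have hc := invQPoch_eq_mul_succ hq (i + c)
    push_cast at hc ⊢
    rw [show (n : ℤ) + 1 - (i + 1) = n - i by ring, show (i : ℤ) + 1 - 1 = i by ring,
      show (i : ℤ) + 1 + c = i + c + 1 by ring, ← add_assoc, hc]
    ring

/-- The coefficient `1 / ((q;q)_{n-r} (q;q)_{n+r+ε})` of the Bailey transform relative to
`a = q^ε`. -/
noncomputable def baileyKernel (q : ℂ) (ε : ℕ) (n r : ℤ) : ℂ :=
  invQPoch q (n - r) * invQPoch q (n + r + ε)

theorem baileyKernel_of_lt (q : ℂ) (ε : ℕ) {n r : ℤ} (h : n < r) : baileyKernel q ε n r = 0 := by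
  rw [baileyKernel, invQPoch_of_neg q (by omega), zero_mul]

theorem baileyKernel_of_lt_neg (q : ℂ) (ε : ℕ) {n r : ℤ} (h : r < -n - ε) :
    baileyKernel q ε n r = 0 := by
  rw [baileyKernel, invQPoch_of_neg q (z := n + r + ε) (by omega), mul_zero]

theorem baileyKernel_reflect (q : ℂ) (ε : ℕ) (n r : ℤ) :
    baileyKernel q ε n (-ε - r) = baileyKernel q ε n r := by
  simp only [baileyKernel]
  rw [mul_comm]
  ring_nf

theorem baileyKernel_neg (q : ℂ) (n r : ℤ) : baileyKernel q 0 n (-r) = baileyKernel q 0 n r := by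
  simpa using baileyKernel_reflect q 0 n r

theorem sum_mul_baileyKernel_natCast (hq : ¬ IsOfFinOrder q) (ε n u : ℕ) :
    ∑ k ∈ range (n + 1),
        invQPoch q (n - k) * q ^ (k ^ 2 + ε * k) * baileyKernel q ε k u =
      q ^ (u ^ 2 + ε * u) * baileyKernel q ε n u := by
  have hzero : ∀ k < u, invQPoch q (n - k) * q ^ (k ^ 2 + ε * k) * baileyKernel q ε k u = 0 :=
    fun k hk ↦ by rw [baileyKernel_of_lt q ε (by omega), mul_zero]
  obtain hnu | hun := lt_or_ge n u
  · rw [baileyKernel_of_lt q ε (by omega), mul_zero]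
    exact sum_eq_zero fun k hk ↦ hzero k (by have := mem_range_succ_iff.1 hk; omega)
  · obtain ⟨d, rfl⟩ := Nat.exists_eq_add_of_le hun
    rw [add_assoc, sum_range_add, sum_eq_zero fun k hk ↦ hzero k (mem_range.1 hk), zero_add]
    have hV := sum_invQPoch_mul_invQPoch hq d (2 * u + ε)
    simp only [baileyKernel]
    push_cast at hV ⊢
    rw [show (u : ℤ) + d - u = d by ring, show (u : ℤ) + d + u + ε = d + (2 * u + ε) by ring,
      ← hV, mul_sum]
    refine sum_congr rfl fun i _ ↦ ?_
    rw [show (u : ℤ) + d - (u + i) = d - i by ring, show (u : ℤ) + i - u = i by ring,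
      show (u : ℤ) + i + u + ε = i + (2 * u + ε) by ring]
    ring

theorem sum_mul_baileyKernel (hq : ¬ IsOfFinOrder q) {ε : ℕ} (hε : ε ≤ 1) (n : ℕ) (r : ℤ) :
    ∑ k ∈ range (n + 1), invQPoch q (n - k) * q ^ (k ^ 2 + ε * k) * baileyKernel q ε k r =
      q ^ (r ^ 2 + ε * r) * baileyKernel q ε n r := by
  obtain ⟨u, rfl | rfl⟩ : ∃ u : ℕ, r = u ∨ r = -ε - u := by
    obtain hr | hr := le_or_gt 0 r
    · exact ⟨r.toNat, by omega⟩
    · exact ⟨(-r - ε).toNat, by omega⟩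
  · rw [sum_mul_baileyKernel_natCast hq]
    norm_cast
  · simp only [baileyKernel_reflect]
    rw [sum_mul_baileyKernel_natCast hq,
      show (-(ε : ℤ) - u) ^ 2 + ε * (-ε - u) = (u ^ 2 + ε * u : ℕ) by push_cast; ring,
      zpow_natCast]

theorem summable_mul_baileyKernel (q : ℂ) (ε : ℕ) (φ : ℤ → ℂ) (n : ℤ) :
    Summable fun r ↦ φ r * baileyKernel q ε n r := by
  refine summable_of_ne_finset_zero (s := Icc (-n - ε) n) fun r hr ↦ ?_
  rw [Finset.mem_Icc, not_and_or, not_le, not_le] at hr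
  obtain hr | hr := hr
  · rw [baileyKernel_of_lt_neg q ε hr, mul_zero]
  · rw [baileyKernel_of_lt q ε hr, mul_zero]

/-- The generating function of the `β`-side of a Bailey pair relative to `a = q^ε` whose
`α`-side is given in bilateral form by `φ`: `β_n = ∑ r : ℤ, φ r / ((q;q)_{n-r} (q;q)_{n+r+ε})`. -/
noncomputable def baileySeries (q : ℂ) (ε : ℕ) (φ : ℤ → ℂ) : ℂ⟦X⟧ :=
  mk fun n ↦ ∑' r : ℤ, φ r * baileyKernel q ε n r

theorem coeff_baileySeries (q : ℂ) (ε : ℕ) (φ : ℤ → ℂ) (n : ℕ) :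
    coeff n (baileySeries q ε φ) = ∑' r : ℤ, φ r * baileyKernel q ε n r := coeff_mk _ _

theorem baileyStep_baileySeries (hq : ¬ IsOfFinOrder q) {ε : ℕ} (hε : ε ≤ 1) (φ : ℤ → ℂ) :
    baileyStep q ε (baileySeries q ε φ) =
      baileySeries q ε fun r ↦ q ^ (r ^ 2 + ε * r) * φ r := by
  ext n
  simp only [coeff_baileyStep, coeff_baileySeries, ← tsum_mul_left]
  rw [← Summable.tsum_finsetSum fun (k : ℕ) _ ↦
    (summable_mul_baileyKernel q ε φ (k : ℤ)).mul_left _]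
  refine tsum_congr fun r ↦ ?_
  rw [mul_right_comm, ← sum_mul_baileyKernel hq hε, sum_mul]
  exact sum_congr rfl fun k _ ↦ by ring

theorem baileyStep_pow_baileySeries (hq : ¬ IsOfFinOrder q) (hq0 : q ≠ 0) {ε : ℕ} (hε : ε ≤ 1)
    (φ : ℤ → ℂ) (i : ℕ) :
    (baileyStep q ε ^ i) (baileySeries q ε φ) =
      baileySeries q ε fun r ↦ q ^ (i * (r ^ 2 + ε * r)) * φ r := by
  induction i with
  | zero => simp
  | succ i ih =>
    rw [pow_succ', Module.End.mul_apply, ih, baileyStep_baileySeries hq hε]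
    congr! 2 with r
    rw [← mul_assoc, ← zpow_add₀ hq0]
    push_cast
    ring_nf

theorem baileySeries_zero_comp_neg (q : ℂ) (φ : ℤ → ℂ) :
    baileySeries q 0 (fun r ↦ φ (-r)) = baileySeries q 0 φ := by
  ext n
  rw [coeff_baileySeries, coeff_baileySeries, ← (Equiv.neg ℤ).tsum_eq]
  simp [baileyKernel_neg]

theorem baileySeries_zero_eq_one (hq : ¬ IsOfFinOrder q) (hq0 : q ≠ 0) {φ : ℤ → ℂ}
    (hφ : ∀ r, φ (-1 - r) = -q ^ (2 * r + 1) * φ r) :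
    baileySeries q 0 φ = baileySeries q 1 φ := by
  ext n
  have hodd : ∑' r : ℤ, q ^ r * φ r * baileyKernel q 1 n r = 0 := by
    rw [← self_eq_neg, ← tsum_neg, ← (Equiv.subLeft (-1 : ℤ)).tsum_eq]
    refine tsum_congr fun r ↦ ?_
    have hr : q ^ (2 * r + 1) = q ^ r / q ^ (-1 - r) := by rw [← zpow_sub₀ hq0]; ring_nf
    have hne := zpow_ne_zero (-1 - r) hq0
    have hK := baileyKernel_reflect q 1 n r
    rw [Nat.cast_one] at hK
    rw [Equiv.subLeft_apply, hK, hφ, hr]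
    field_simp
  have hK (r : ℤ) : φ r * baileyKernel q 0 n r = φ r * baileyKernel q 1 n r -
      q ^ ((n : ℤ) + 1) * (q ^ r * φ r * baileyKernel q 1 n r) := by
    have := invQPoch_sub_one hq (n + r + 1)
    rw [add_sub_cancel_right, add_right_comm, zpow_add₀ hq0] at this
    rw [baileyKernel, baileyKernel, Nat.cast_zero, add_zero, this, Nat.cast_one]
    ring_nf
  rw [coeff_baileySeries, coeff_baileySeries, tsum_congr hK,
    Summable.tsum_sub (summable_mul_baileyKernel q 1 φ n)
      ((summable_mul_baileyKernel q 1 _ n).mul_left _), tsum_mul_left, hodd, mul_zero, sub_zero]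

/-- The sequence `(-1)^r q^(r(r-1)/2)`, the bilateral form of the `α`-side of the unit Bailey
pair. -/
noncomputable def unitBailey (q : ℂ) (r : ℤ) : ℂ := (-1) ^ r * q ^ (r * (r - 1) / 2)

theorem unitBailey_zero (q : ℂ) : unitBailey q 0 = 1 := by simp [unitBailey]

theorem unitBailey_neg (hq0 : q ≠ 0) (r : ℤ) : unitBailey q (-r) = q ^ r * unitBailey q r := by
  have hexp : -r * (-r - 1) / 2 = r + r * (r - 1) / 2 := by
    rw [show -r * (-r - 1) = r * (r - 1) + r * 2 by ring, Int.add_mul_ediv_right _ _ two_ne_zero,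
      add_comm]
  rw [unitBailey, unitBailey, hexp, zpow_add₀ hq0, zpow_neg, ← inv_zpow, inv_neg_one]
  ring

theorem unitBailey_add_one (hq0 : q ≠ 0) (r : ℤ) :
    unitBailey q (r + 1) = -q ^ r * unitBailey q r := by
  have hexp : (r + 1) * (r + 1 - 1) / 2 = r + r * (r - 1) / 2 := by
    rw [show (r + 1) * (r + 1 - 1) = r * (r - 1) + r * 2 by ring,
      Int.add_mul_ediv_right _ _ two_ne_zero, add_comm]
  rw [unitBailey, unitBailey, hexp, zpow_add₀ hq0, zpow_add₀ (neg_ne_zero.2 one_ne_zero)]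
  ring

theorem unitBailey_neg_one_sub (hq0 : q ≠ 0) (r : ℤ) :
    unitBailey q (-1 - r) = -q ^ (2 * r + 1) * unitBailey q r := by
  rw [show -1 - r = -(r + 1) by ring, unitBailey_neg hq0, unitBailey_add_one hq0,
    show 2 * r + 1 = r + 1 + r by ring, zpow_add₀ hq0 (r + 1)]
  ring

theorem baileySeries_unitBailey_mul_zpow (hq0 : q ≠ 0) :
    baileySeries q 0 (fun r ↦ unitBailey q r * q ^ r) = baileySeries q 0 (unitBailey q) := by
  rw [← baileySeries_zero_comp_neg q (unitBailey q)]
  simp only [unitBailey_neg hq0, mul_comm]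

theorem coeff_baileySeries_unitBailey_add_mul_zpow (hq : ¬ IsOfFinOrder q) (hq0 : q ≠ 0) {n : ℕ}
    (hn : n ≠ 0) :
    coeff n (baileySeries q 0 (unitBailey q)) +
      coeff n (baileySeries q 0 fun r ↦ unitBailey q r * q ^ r) = 0 := by
  set s : ℤ → ℂ := fun r ↦ unitBailey q r * (invQPoch q (n - r) * invQPoch q (n + r - 1))
  have hs : Summable s := by
    refine summable_of_ne_finset_zero (s := Icc (-n : ℤ) n) fun r hr ↦ ?_
    rw [Finset.mem_Icc, not_and_or, not_le, not_le] at hr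
    obtain hr | hr := hr
    · simp [s, invQPoch_of_neg q (show (n : ℤ) + r - 1 < 0 by omega)]
    · simp [s, invQPoch_of_neg q (show (n : ℤ) - r < 0 by omega)]
  have htelescope (r : ℤ) : s r - s (r + 1) =
      (1 - q ^ n) * (unitBailey q r * baileyKernel q 0 n r +
        unitBailey q r * q ^ r * baileyKernel q 0 n r) := by
    simp only [s, baileyKernel, Nat.cast_zero, add_zero]
    rw [show (n : ℤ) - (r + 1) = n - r - 1 by ring, show (n : ℤ) + (r + 1) - 1 = n + r by ring,
      invQPoch_sub_one hq (n - r), invQPoch_sub_one hq (n + r), unitBailey_add_one hq0,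
      zpow_add₀ hq0, zpow_sub₀ hq0, zpow_natCast]
    have := zpow_ne_zero r hq0
    field_simp
    ring
  have hs' : Summable fun r ↦ s (r + 1) := (Equiv.addRight (1 : ℤ)).summable_iff.2 hs
  have hsum : ∑' r, (s r - s (r + 1)) = 0 := by
    rw [hs.tsum_sub hs', sub_eq_zero]
    exact ((Equiv.addRight (1 : ℤ)).tsum_eq s).symm
  rw [tsum_congr htelescope, tsum_mul_left, (summable_mul_baileyKernel q 0 _ n).tsum_add
    (summable_mul_baileyKernel q 0 _ n), mul_eq_zero, or_iff_right
    (one_sub_pow_ne_zero_of_not_isOfFinOrder hq hn.pos)] at hsum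
  simpa only [coeff_baileySeries] using hsum

theorem baileySeries_unitBailey (hq : ¬ IsOfFinOrder q) (hq0 : q ≠ 0) :
    baileySeries q 0 (unitBailey q) = 1 := by
  ext n
  obtain rfl | hn := eq_or_ne n 0
  · rw [coeff_baileySeries, tsum_eq_single 0 fun r hr ↦ ?_]
    · simp [baileyKernel, invQPoch_zero, unitBailey_zero]
    · obtain hr | hr := lt_or_gt_of_ne hr
      · rw [baileyKernel_of_lt_neg q 0 (by simpa using hr), mul_zero]
      · rw [baileyKernel_of_lt q 0 (by simpa using hr), mul_zero]
  · have hsum := coeff_baileySeries_unitBailey_add_mul_zpow hq hq0 hn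
    rw [baileySeries_unitBailey_mul_zpow hq0, add_self_eq_zero] at hsum
    rw [hsum, coeff_one, if_neg hn]

end BaileySeries

section LatticeChange

open PowerSeries

variable {q : ℂ}

theorem baileyKernel_sub_one (hq : ¬ IsOfFinOrder q) (N n : ℤ) :
    baileyKernel q 0 (N - 1) n = (1 - q ^ (N - n)) * (1 - q ^ (N + n)) * baileyKernel q 0 N n := by
  rw [baileyKernel, baileyKernel, Nat.cast_zero, add_zero, add_zero, sub_right_comm,
    sub_add_eq_add_sub, invQPoch_sub_one hq, invQPoch_sub_one hq]
  ring

/-- The factor `q^(2r²) (q^r - q^(-r))` produced by the change of lattice, see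
`latticeChange`. -/
noncomputable def latticeWeight (q : ℂ) (r : ℤ) : ℂ := q ^ (2 * r ^ 2) * (q ^ r - q ^ (-r))

theorem latticeWeight_mul_baileyKernel_sub (hq : ¬ IsOfFinOrder q) (hq0 : q ≠ 0) (N n : ℤ) :
    latticeWeight q n * (baileyKernel q 0 N n - baileyKernel q 0 (N - 1) n) =
      q ^ (N + 2 * n ^ 2 + 2 * n) * (1 - q ^ (N - n)) * baileyKernel q 0 N n -
        q ^ (N + 2 * (n - 1) ^ 2 + 2 * (n - 1)) * (1 - q ^ (N - (n - 1))) *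
          baileyKernel q 0 N (n - 1) := by
  have hshift : (1 - q ^ (N - (n - 1))) * baileyKernel q 0 N (n - 1) =
      (1 - q ^ (N + n)) * baileyKernel q 0 N n := by
    have hleft := invQPoch_sub_one hq (N - (n - 1))
    rw [sub_sub, sub_add_cancel] at hleft
    rw [baileyKernel, baileyKernel, Nat.cast_zero, add_zero, add_zero, ← mul_assoc, ← hleft,
      ← add_sub_assoc, invQPoch_sub_one hq]
    ring
  rw [mul_assoc (q ^ (N + 2 * (n - 1) ^ 2 + 2 * (n - 1))), hshift, baileyKernel_sub_one hq,
    show N + 2 * n ^ 2 + 2 * n = 2 * n ^ 2 + N + n + n by ring,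
    show N + 2 * (n - 1) ^ 2 + 2 * (n - 1) = 2 * n ^ 2 + N - n - n by ring]
  simp only [latticeWeight, zpow_add₀ hq0, zpow_sub₀ hq0, zpow_neg]
  have := zpow_ne_zero n hq0
  field_simp
  ring

theorem sum_pow_mul_baileyKernel_natCast (hq : ¬ IsOfFinOrder q) (hq0 : q ≠ 0) {u N B : ℕ}
    (hu : u ≤ B) (hN : N ≤ B) :
    ∑ j ∈ range (N + 1), q ^ j * baileyKernel q 0 j u =
      q ^ u * baileyKernel q 0 N u + q ^ (-2 * (u : ℤ) ^ 2) *
        ∑ n ∈ Ico u B, latticeWeight q (n + 1) * baileyKernel q 0 N (n + 1) := by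
  induction N with
  | zero =>
    rw [sum_range_one, pow_zero, one_mul,
      sum_eq_zero fun n _ ↦ by rw [baileyKernel_of_lt q 0 (by norm_cast; omega), mul_zero],
      mul_zero, add_zero]
    obtain rfl | hu0 := eq_or_ne u 0
    · simp
    · rw [baileyKernel_of_lt q 0 (by omega), mul_zero]
  | succ N ih =>
    set g : ℕ → ℂ := fun n ↦ q ^ ((N + 1 : ℕ) + 2 * (n : ℤ) ^ 2 + 2 * n) *
      (1 - q ^ ((N + 1 : ℕ) - n : ℤ)) * baileyKernel q 0 (N + 1 : ℕ) n with hg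
    have hgB : g B = 0 := by
      obtain hB | hB := hN.eq_or_lt
      · simp [hg, ← hB]
      · simp only [hg, baileyKernel_of_lt q 0 (Nat.cast_lt.2 hB), mul_zero]
    have hpred : ((N + 1 : ℕ) : ℤ) - 1 = N := by omega
    have htelescope : ∑ n ∈ Ico u B, latticeWeight q (n + 1) *
        (baileyKernel q 0 (N + 1 : ℕ) (n + 1) - baileyKernel q 0 N (n + 1)) = -g u := by
      rw [← zero_sub, ← hgB, ← sum_Ico_sub g hu]
      refine sum_congr rfl fun n _ ↦ ?_
      have := latticeWeight_mul_baileyKernel_sub hq hq0 (N + 1 : ℕ) (n + 1)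
      rw [hpred, add_sub_cancel_right] at this
      rw [this, hg]
      push_cast
      rfl
    have hK := baileyKernel_sub_one hq (N + 1 : ℕ) u
    rw [hpred] at hK
    simp only [mul_sub, sum_sub_distrib] at htelescope
    rw [sum_range_succ, ih (by omega), eq_add_of_sub_eq htelescope, hK, ← sub_eq_zero]
    simp only [hg, two_mul (u : ℤ), neg_mul, zpow_neg, zpow_add₀ hq0, zpow_sub₀ hq0, zpow_natCast]
    have := zpow_ne_zero (2 * (u : ℤ) ^ 2) hq0
    field_simp
    ring

theorem sum_pow_mul_baileyKernel (hq : ¬ IsOfFinOrder q) (hq0 : q ≠ 0) {N : ℕ} {r : ℤ}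
    (hr : r.natAbs ≤ N) :
    ∑ j ∈ range (N + 1), q ^ j * baileyKernel q 0 j r =
      q ^ r.natAbs * baileyKernel q 0 N r + q ^ (-2 * r ^ 2) *
        ∑ n ∈ Ico r.natAbs N, latticeWeight q (n + 1) * baileyKernel q 0 N (n + 1) := by
  have hK (j : ℕ) : baileyKernel q 0 j r = baileyKernel q 0 j r.natAbs := by
    obtain h | h := Int.natAbs_eq r
    · rw [← h]
    · conv_lhs => rw [h, baileyKernel_neg]
  simpa only [hK, Int.natAbs_sq] using sum_pow_mul_baileyKernel_natCast hq hq0 hr le_rfl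

theorem coeff_baileySeries_zero (q : ℂ) (φ : ℤ → ℂ) {n N : ℕ} (hn : n ≤ N) :
    coeff n (baileySeries q 0 φ) = ∑ r ∈ Icc (-N : ℤ) N, φ r * baileyKernel q 0 n r := by
  rw [coeff_baileySeries, tsum_eq_sum fun r hr ↦ ?_]
  rw [Finset.mem_Icc, not_and_or, not_le, not_le] at hr
  obtain hr | hr := hr
  · rw [baileyKernel_of_lt_neg q 0 (by omega), mul_zero]
  · rw [baileyKernel_of_lt q 0 (by omega), mul_zero]

theorem sum_Icc_sum_Ico_natAbs {E : Type*} [AddCommMonoid E] (N : ℕ) (f : ℤ → ℤ → E) :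
    ∑ r ∈ Icc (-N : ℤ) N, ∑ n ∈ Ico r.natAbs N, f r (n + 1) =
      ∑ r ∈ Icc (-N : ℤ) N, ∑ ρ ∈ Ioo (-r) r, f ρ r := by
  rw [sum_comm' (t' := range N) (s' := fun n ↦ Ioo (-(n + 1 : ℕ) : ℤ) (n + 1 : ℕ))
    fun r n ↦ by simp only [Finset.mem_Icc, Finset.mem_Ico, Finset.mem_Ioo, mem_range]; omega]
  refine sum_of_injOn (fun n ↦ ((n + 1 : ℕ) : ℤ)) (fun a _ b _ h ↦ by simpa using h)
    (fun n hn ↦ ?_) (fun r hr hr' ↦ ?_) fun n _ ↦ rfl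
  · simp only [coe_range, Set.mem_Iio, coe_Icc, Set.mem_Icc] at hn ⊢
    omega
  · refine sum_eq_zero fun ρ hρ ↦ (hr' ⟨(r - 1).toNat, ?_, ?_⟩).elim <;>
      simp only [Finset.mem_Icc, Finset.mem_Ioo, coe_range, Set.mem_Iio] at hr hρ ⊢ <;> omega

/-- The effect on the bilateral form `φ` of the `α`-side of replacing `β_n` by `∑ j ≤ n, q^j β_j`,
see `qDilation_one_baileySeries`. -/
noncomputable def latticeChange (q : ℂ) (φ : ℤ → ℂ) (r : ℤ) : ℂ :=
  q ^ r.natAbs * φ r + latticeWeight q r * ∑ ρ ∈ Ioo (-r) r, q ^ (-2 * ρ ^ 2) * φ ρ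

theorem qDilation_one_baileySeries (hq : ¬ IsOfFinOrder q) (hq0 : q ≠ 0) (φ : ℤ → ℂ) :
    qDilation q 1 (baileySeries q 0 φ) = baileySeries q 0 (latticeChange q φ) := by
  ext N
  have hcoeff : coeff N (qDilation q 1 (baileySeries q 0 φ)) =
      ∑ r ∈ Icc (-N : ℤ) N, φ r * ∑ j ∈ range (N + 1), q ^ j * baileyKernel q 0 j r := by
    rw [coeff_qDilation_one hq]
    simp only [mul_sum]
    rw [sum_comm]
    refine sum_congr rfl fun j hj ↦ ?_
    rw [coeff_baileySeries_zero q φ (mem_range_succ_iff.1 hj), mul_sum]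
    exact sum_congr rfl fun r _ ↦ mul_left_comm ..
  rw [hcoeff, coeff_baileySeries_zero q _ le_rfl, sum_congr rfl fun r hr ↦ by
    rw [sum_pow_mul_baileyKernel hq hq0 (by have := Finset.mem_Icc.1 hr; omega), mul_add, mul_sum,
      mul_sum], sum_add_distrib,
    sum_Icc_sum_Ico_natAbs N fun r n ↦
      φ r * (q ^ (-2 * r ^ 2) * (latticeWeight q n * baileyKernel q 0 N n)), ← sum_add_distrib]
  refine sum_congr rfl fun r _ ↦ ?_
  rw [latticeChange, add_mul, mul_sum, sum_mul]
  congr 1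
  · ring
  · exact sum_congr rfl fun ρ _ ↦ by ring

end LatticeChange

section FiniteIdentity

open PowerSeries

variable {q : ℂ}

/-- The bilateral form of the `α`-side that `m` steps of the Bailey chain relative to `a = 1`,
followed by `d` steps relative to `a = q`, carry to the unit Bailey pair. -/
noncomputable def unitBaileyPreimage (q : ℂ) (m d : ℕ) (r : ℤ) : ℂ :=
  q ^ (-(m * r ^ 2 + d * (r ^ 2 + r))) * unitBailey q r

theorem unitBaileyPreimage_zero_zero (q : ℂ) : unitBaileyPreimage q 0 0 = unitBailey q := by
  ext r
  simp [unitBaileyPreimage]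

theorem baileyStep_zero_pow_unitBaileyPreimage (hq : ¬ IsOfFinOrder q) (hq0 : q ≠ 0) (m d : ℕ) :
    (baileyStep q 0 ^ m) (baileySeries q 0 (unitBaileyPreimage q m d)) =
      baileySeries q 0 (unitBaileyPreimage q 0 d) := by
  rw [baileyStep_pow_baileySeries hq hq0 zero_le_one]
  congr! 2 with r
  rw [unitBaileyPreimage, ← mul_assoc, ← zpow_add₀ hq0, unitBaileyPreimage]
  push_cast
  ring_nf

theorem baileyStep_one_pow_unitBaileyPreimage (hq : ¬ IsOfFinOrder q) (hq0 : q ≠ 0) (i d : ℕ) :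
    (baileyStep q 1 ^ i) (baileySeries q 0 (unitBaileyPreimage q 0 (i + d))) =
      baileySeries q 0 (unitBaileyPreimage q 0 d) := by
  have hsymm (d : ℕ) (r : ℤ) : unitBaileyPreimage q 0 d (-1 - r) =
      -q ^ (2 * r + 1) * unitBaileyPreimage q 0 d r := by
    rw [unitBaileyPreimage, unitBaileyPreimage, unitBailey_neg_one_sub hq0]
    ring_nf
  rw [baileySeries_zero_eq_one hq hq0 (hsymm _), baileySeries_zero_eq_one hq hq0 (hsymm _),
    baileyStep_pow_baileySeries hq hq0 le_rfl]
  congr! 2 with r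
  rw [unitBaileyPreimage, ← mul_assoc, ← zpow_add₀ hq0, unitBaileyPreimage]
  push_cast
  ring_nf

theorem baileyStep_pow_mul_pow_unitBaileyPreimage (hq : ¬ IsOfFinOrder q) (hq0 : q ≠ 0)
    (m d : ℕ) :
    (baileyStep q 1 ^ d * baileyStep q 0 ^ m) (baileySeries q 0 (unitBaileyPreimage q m d)) =
      1 := by
  have hd := baileyStep_one_pow_unitBaileyPreimage hq hq0 d 0
  rw [add_zero, unitBaileyPreimage_zero_zero, baileySeries_unitBailey hq hq0] at hd
  rw [Module.End.mul_apply, baileyStep_zero_pow_unitBaileyPreimage hq hq0, hd]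

theorem baileyStep_mul_mul_pow_unitBaileyPreimage (hq : ¬ IsOfFinOrder q) (hq0 : q ≠ 0)
    (m j : ℕ) :
    (baileyStep q 0 ^ j * baileyStep q 1 * baileyStep q 0 ^ m)
        (baileySeries q 0 (unitBaileyPreimage q m (j + 1))) =
      baileySeries q 0 (fun r ↦ q ^ (-j * r) * unitBailey q r) := by
  rw [Module.End.mul_apply, Module.End.mul_apply, baileyStep_zero_pow_unitBaileyPreimage hq hq0,
    ← pow_one (baileyStep q 1), add_comm j 1, baileyStep_one_pow_unitBaileyPreimage hq hq0 1 j,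
    baileyStep_pow_baileySeries hq hq0 zero_le_one]
  congr! 2 with r
  rw [unitBaileyPreimage, ← mul_assoc, ← zpow_add₀ hq0]
  push_cast
  ring_nf

/-- The monomial of the Hecke-type double sum with indices `n` and `r`, up to the factor
depending on `x`. -/
noncomputable def heckeMonomial (q : ℂ) (t d : ℕ) (n r : ℤ) : ℂ :=
  q ^ ((t + 2) * (n ^ 2 - r ^ 2) - d * r) * unitBailey q r

/-- The inner sum of the Hecke-type double sum. -/
noncomputable def heckeCoeff (q : ℂ) (t d : ℕ) (n : ℤ) : ℂ :=
  ∑ r ∈ Ico (-n) n, heckeMonomial q t d n r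

/-- The bilateral form of the `α`-side of the Bailey pair whose `β`-side is the nested sum of
length `m + d`, see `nestedSum_stepWeight_eq_coeff`. -/
noncomputable def nestedAlpha (q : ℂ) (m d : ℕ) (r : ℤ) : ℂ :=
  q ^ ((m + d) * r ^ 2) * latticeChange q (unitBaileyPreimage q m d) r -
    q ^ (r - d * r) * unitBailey q r

theorem nestedSum_stepWeight_eq_coeff (hq : ¬ IsOfFinOrder q) (hq0 : q ≠ 0) (m d : ℕ) {n : ℕ}
    (hn : n ≠ 0) :
    nestedSum q m n (m + d) (fun l S ↦ stepWeight q m (m + d) l S n) =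
      coeff n (baileySeries q 0 (nestedAlpha q m d)) := by
  set φ := unitBaileyPreimage q m d
  have hone := baileyStep_pow_mul_pow_unitBaileyPreimage hq hq0 m d
  have hsplit : coeff n (baileySeries q 0 (nestedAlpha q m d)) =
      coeff n ((baileyStep q 0 ^ (m + d)) (qDilation q 1 (baileySeries q 0 φ))) -
        coeff n (baileySeries q 0 fun r ↦ q ^ (r - d * r) * unitBailey q r) := by
    rw [qDilation_one_baileySeries hq hq0, baileyStep_pow_baileySeries hq hq0 zero_le_one]
    simp only [coeff_baileySeries, nestedAlpha, sub_mul]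
    rw [Summable.tsum_sub (summable_mul_baileyKernel q 0 _ n) (summable_mul_baileyKernel q 0 _ n)]
    push_cast
    simp only [zero_mul, add_zero, φ]
  rw [hsplit]
  cases d with
  | zero =>
    have hzero : coeff n (baileySeries q 0 fun r ↦ q ^ (r - (0 : ℕ) * r) * unitBailey q r) = 0 := by
      simp only [Nat.cast_zero, zero_mul, sub_zero, mul_comm _ (unitBailey q _)]
      rw [baileySeries_unitBailey_mul_zpow hq0, baileySeries_unitBailey hq hq0, coeff_one,
        if_neg hn]
    have h := IsNestedImage.baileyStep_pow hq n (le_refl m) (baileySeries q 0 φ)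
    rw [show (baileyStep q 0 ^ m) (baileySeries q 0 φ) = 1 by simpa using hone] at h
    rw [hzero, sub_zero]
    exact nestedSum_stepWeight_of_isNestedImage_one h hn
  | succ j =>
    have h := IsNestedImage.baileyStep_pow_mul_pow hq m n j (baileySeries q 0 φ)
    rw [hone, baileyStep_mul_mul_pow_unitBaileyPreimage hq hq0] at h
    rw [nestedSum_stepWeight_of_isNestedImage_one h hn, map_sub]
    congr! 5 with r
    push_cast
    ring_nf

theorem nestedAlpha_eq (hq0 : q ≠ 0) (m d : ℕ) (r : ℤ) :
    nestedAlpha q m d r = q ^ (-(d * r)) * unitBailey q r * (q ^ r.natAbs - q ^ r) +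
      (q ^ r - q ^ (-r)) * ∑ ρ ∈ Ioo (-r) r, heckeMonomial q (m + d) d r ρ := by
  have hmono (ρ : ℤ) : heckeMonomial q (m + d) d r ρ =
      q ^ ((m + d) * r ^ 2) * q ^ (2 * r ^ 2) *
        (q ^ (-2 * ρ ^ 2) * unitBaileyPreimage q m d ρ) := by
    simp only [heckeMonomial, unitBaileyPreimage, ← mul_assoc, ← zpow_add₀ hq0]
    push_cast
    ring_nf
  simp only [hmono, ← mul_sum]
  have hexp : q ^ (-(d * r)) = q ^ ((m + d) * r ^ 2) * q ^ (-(m * r ^ 2 + d * (r ^ 2 + r))) := by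
    rw [← zpow_add₀ hq0]
    ring_nf
  rw [nestedAlpha, latticeChange, latticeWeight, sub_eq_add_neg r, zpow_add₀ hq0 r, hexp,
    unitBaileyPreimage]
  ring

theorem nestedAlpha_zero (hq0 : q ≠ 0) (m d : ℕ) : nestedAlpha q m d 0 = 0 := by
  simp [nestedAlpha_eq hq0]

theorem nestedAlpha_add_neg (hq0 : q ≠ 0) (m d j : ℕ) :
    nestedAlpha q m d (j + 1) + nestedAlpha q m d (-(j + 1)) =
      heckeCoeff q (m + d) d (j + 1) * (q ^ ((j : ℤ) + 1) - q ^ (-((j : ℤ) + 1))) := by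
  have habs : q ^ ((j : ℤ) + 1) = q ^ ((j : ℤ) + 1).natAbs := by rw [← zpow_natCast]; congr
  have hmono : heckeMonomial q (m + d) d (j + 1) (-(j + 1)) =
      q ^ (-(d * (-((j : ℤ) + 1)))) * unitBailey q (-(j + 1)) := by
    rw [heckeMonomial]
    ring_nf
  rw [nestedAlpha_eq hq0, nestedAlpha_eq hq0, heckeCoeff,
    ← Ioo_insert_left (show -((j : ℤ) + 1) < j + 1 by omega), sum_insert left_notMem_Ioo, hmono,
    Int.natAbs_neg, ← habs, Ioo_eq_empty (show ¬ -(-((j : ℤ) + 1)) < -(j + 1) by omega)]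
  simp only [sub_self, sum_empty, mul_zero, zero_add, add_zero]
  ring

theorem nestedSum_stepWeight_eq_tsum (hq : ¬ IsOfFinOrder q) (hq0 : q ≠ 0) (m d : ℕ) {n : ℕ}
    (hn : n ≠ 0) :
    nestedSum q m n (m + d) (fun l S ↦ stepWeight q m (m + d) l S n) =
      ∑' j : ℕ, heckeCoeff q (m + d) d (j + 1) * (q ^ ((j : ℤ) + 1) - q ^ (-((j : ℤ) + 1))) *
        baileyKernel q 0 n (j + 1) := by
  set F : ℤ → ℂ := fun r ↦ nestedAlpha q m d r * baileyKernel q 0 n r with hF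
  have hs : Summable F := summable_mul_baileyKernel q 0 (nestedAlpha q m d) n
  have hpos : Summable fun j : ℕ ↦ F (j + 1) :=
    hs.comp_injective (i := fun j : ℕ ↦ (j : ℤ) + 1) fun a b h ↦ by simpa using h
  have hneg : Summable fun j : ℕ ↦ F (-(j + 1)) :=
    hs.comp_injective (i := fun j : ℕ ↦ -((j : ℤ) + 1)) fun a b h ↦ by simpa using h
  rw [nestedSum_stepWeight_eq_coeff hq hq0 m d hn, coeff_baileySeries, ← hF,
    tsum_of_add_one_of_neg_add_one hpos hneg, hF]
  simp only [nestedAlpha_zero hq0, zero_mul, add_zero]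
  rw [← hpos.tsum_add hneg]
  refine tsum_congr fun j ↦ ?_
  simp only [hF, baileyKernel_neg, ← add_mul, nestedAlpha_add_neg hq0]

end FiniteIdentity

section QPochLimits

open Filter Topology

variable {q : ℂ}

theorem not_isOfFinOrder_of_norm_lt_one (hq1 : ‖q‖ < 1) : ¬ IsOfFinOrder q :=
  fun h ↦ hq1.ne h.norm_eq_one

theorem summable_norm_neg_mul_pow (hq1 : ‖q‖ < 1) (a : ℂ) :
    Summable fun j : ℕ ↦ ‖-(a * q ^ j)‖ := by
  simpa only [norm_neg, norm_mul, norm_pow] using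
    (summable_geometric_of_lt_one (norm_nonneg q) hq1).mul_left ‖a‖

theorem norm_qPoch_le (hq1 : ‖q‖ < 1) (a : ℂ) (n : ℕ) :
    ‖qPoch q a n‖ ≤ Real.exp (‖a‖ / (1 - ‖q‖)) := by
  calc ‖qPoch q a n‖ = ∏ j ∈ range n, ‖1 - a * q ^ j‖ := norm_prod _ _
    _ ≤ ∏ j ∈ range n, Real.exp (‖a‖ * ‖q‖ ^ j) := by
      refine prod_le_prod (fun _ _ ↦ norm_nonneg _) fun j _ ↦ ?_
      have h := norm_sub_le 1 (a * q ^ j)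
      rw [norm_one, norm_mul, norm_pow] at h
      linarith [Real.add_one_le_exp (‖a‖ * ‖q‖ ^ j)]
    _ = Real.exp (‖a‖ * ∑ j ∈ range n, ‖q‖ ^ j) := by rw [mul_sum, Real.exp_sum]
    _ ≤ Real.exp (‖a‖ / (1 - ‖q‖)) := by
      rw [div_eq_mul_inv, ← tsum_geometric_of_lt_one (norm_nonneg q) hq1]
      gcongr
      exact (summable_geometric_of_lt_one (norm_nonneg q) hq1).sum_le_tsum _
        fun _ _ ↦ by positivity

theorem tendsto_qPoch (hq1 : ‖q‖ < 1) (a : ℂ) :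
    Tendsto (qPoch q a) atTop (𝓝 (qPochInf q a)) := by
  have h := multipliable_one_add_of_summable (summable_norm_neg_mul_pow hq1 a)
  simp only [← sub_eq_add_neg] at h
  exact h.tendsto_prod_tprod_nat

theorem qPochInf_self_ne_zero (hq1 : ‖q‖ < 1) : qPochInf q q ≠ 0 := by
  simp only [qPochInf, sub_eq_add_neg]
  refine tprod_one_add_ne_zero_of_summable (fun j ↦ ?_) (summable_norm_neg_mul_pow hq1 q)
  rw [← sub_eq_add_neg, ← pow_succ']
  exact one_sub_pow_ne_zero_of_not_isOfFinOrder (not_isOfFinOrder_of_norm_lt_one hq1) j.succ_pos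

theorem tendsto_invQPoch_natCast (hq1 : ‖q‖ < 1) :
    Tendsto (fun n : ℕ ↦ invQPoch q n) atTop (𝓝 (qPochInf q q)⁻¹) := by
  simpa only [invQPoch_natCast] using (tendsto_qPoch hq1 q).inv₀ (qPochInf_self_ne_zero hq1)

theorem tendsto_invQPoch_atTop (hq1 : ‖q‖ < 1) :
    Tendsto (invQPoch q) atTop (𝓝 (qPochInf q q)⁻¹) := by
  refine ((tendsto_invQPoch_natCast hq1).comp (tendsto_atTop_atTop.2 fun b ↦
    ⟨(b : ℤ), fun z hz ↦ ?_⟩ : Tendsto Int.toNat atTop atTop)).congr' ?_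
  · omega
  · filter_upwards [eventually_ge_atTop 0] with z hz
    rw [Function.comp_apply, Int.toNat_of_nonneg hz]

theorem exists_norm_invQPoch_le (hq1 : ‖q‖ < 1) : ∃ C, ∀ z, ‖invQPoch q z‖ ≤ C := by
  obtain ⟨C, hC⟩ := (Metric.isBounded_range_of_tendsto _
    (tendsto_invQPoch_natCast hq1)).exists_norm_le
  refine ⟨C, fun z ↦ ?_⟩
  obtain hz | hz := lt_or_ge z 0
  · simpa [invQPoch_of_neg q hz] using (norm_nonneg _).trans (hC _ ⟨0, rfl⟩)
  · lift z to ℕ using hz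
    exact hC _ ⟨z, rfl⟩

theorem exists_norm_baileyKernel_le (hq1 : ‖q‖ < 1) (ε : ℕ) :
    ∃ C, ∀ n r, ‖baileyKernel q ε n r‖ ≤ C := by
  obtain ⟨C, hC⟩ := exists_norm_invQPoch_le hq1
  exact ⟨C * C, fun n r ↦ norm_mul_le_of_le (hC _) (hC _)⟩

theorem tendsto_baileyKernel (hq1 : ‖q‖ < 1) (ε : ℕ) (r : ℤ) :
    Tendsto (fun n : ℕ ↦ baileyKernel q ε n r) atTop (𝓝 (qPochInf q q ^ 2)⁻¹) := by
  have hinv := tendsto_invQPoch_atTop hq1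
  rw [sq, mul_inv]
  refine (hinv.comp ?_).mul (hinv.comp ?_)
  · exact tendsto_atTop_add_const_right _ (-r) tendsto_natCast_atTop_atTop
  · simpa only [add_assoc] using
      tendsto_atTop_add_const_right _ (r + ε) tendsto_natCast_atTop_atTop

theorem exists_norm_stepWeight_le (hq1 : ‖q‖ < 1) :
    ∃ C, ∀ m i l S k, ‖stepWeight q m i l S k‖ ≤ C := by
  obtain ⟨C, hC⟩ := exists_norm_invQPoch_le hq1
  have hC0 : 0 ≤ C := (norm_nonneg _).trans (hC 0)
  have hmulti (i s : ℕ) : ‖qMultichoose q i s‖ ≤ Real.exp (1 / (1 - ‖q‖)) * C := by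
    refine norm_mul_le_of_le ((norm_qPoch_le hq1 _ _).trans ?_) (hC _)
    have : 0 < 1 - ‖q‖ := by linarith
    gcongr
    rw [norm_pow]
    exact pow_le_one₀ (norm_nonneg q) hq1.le
  refine ⟨Real.exp (1 / (1 - ‖q‖)) * C, fun m i l S k ↦ ?_⟩
  rw [stepWeight, PowerSeries.coeff_X_pow_mul']
  split_ifs
  · rw [norm_zero]; positivity
  · simpa only [qMultichooseSeries, PowerSeries.coeff_mk] using hmulti _ _
  · rw [norm_zero]; positivity

end QPochLimits

section ConjugateBailey

open Filter Topology

variable {q : ℂ}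

/-- The sequence `δ_n = (xq;q)_{n-1} (q/x;q)_{n-1} q^n` of the conjugate Bailey pair. Since
`n - 1` is truncated, `δ_0 = 1`. -/
noncomputable def conjBaileyDelta (q x : ℂ) (n : ℕ) : ℂ :=
  qPoch q (x * q) (n - 1) * qPoch q (q / x) (n - 1) * q ^ n

theorem exists_norm_conjBaileyDelta_le (hq1 : ‖q‖ < 1) (x : ℂ) :
    ∃ C, ∀ n, ‖conjBaileyDelta q x n‖ ≤ C * ‖q‖ ^ n :=
  ⟨_, fun n ↦ norm_mul_le_of_le
    (norm_mul_le_of_le (norm_qPoch_le hq1 _ _) (norm_qPoch_le hq1 _ _)) (norm_pow q n).le⟩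

theorem summable_norm_conjBaileyDelta (hq1 : ‖q‖ < 1) (x : ℂ) :
    Summable fun n ↦ ‖conjBaileyDelta q x n‖ := by
  obtain ⟨C, hC⟩ := exists_norm_conjBaileyDelta_le hq1 x
  exact .of_nonneg_of_le (fun _ ↦ norm_nonneg _) hC
    ((summable_geometric_of_lt_one (norm_nonneg q) hq1).mul_left C)

theorem sum_conjBaileyDelta_mul_baileyKernel (hq : ¬ IsOfFinOrder q) (hq0 : q ≠ 0) {x : ℂ}
    (hx : x ≠ 0) {r : ℤ} (hr : r ≠ 0) (N : ℕ) :
    (1 - x * q ^ r) * (1 - q ^ r / x) *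
        ∑ n ∈ range (N + 1), conjBaileyDelta q x n * baileyKernel q 0 n r =
      qPoch q (x * q) N * qPoch q (q / x) N * baileyKernel q 0 N r * q ^ r := by
  induction N with
  | zero =>
    have hker : baileyKernel q 0 (0 : ℕ) r = 0 := by
      obtain hr | hr := hr.lt_or_gt
      · exact baileyKernel_of_lt_neg q 0 (by omega)
      · exact baileyKernel_of_lt q 0 (by omega)
    simp only [zero_add, range_one, sum_singleton, hker, mul_zero, zero_mul]
  | succ N ih =>
    have hker := baileyKernel_sub_one hq (N + 1 : ℕ) r
    rw [show ((N + 1 : ℕ) : ℤ) - 1 = N by omega, zpow_sub₀ hq0, zpow_add₀ hq0, zpow_natCast]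
      at hker
    have := zpow_ne_zero r hq0
    rw [sum_range_succ, mul_add, ih, hker, conjBaileyDelta, Nat.add_sub_cancel, qPoch_succ,
      qPoch_succ]
    field_simp
    ring

theorem tsum_conjBaileyDelta_mul_baileyKernel (hq0 : q ≠ 0) (hq1 : ‖q‖ < 1) {x : ℂ} (hx : x ≠ 0)
    {r : ℤ} (hr : r ≠ 0) (h : 1 - x * q ^ r ≠ 0) (h' : 1 - q ^ r / x ≠ 0) :
    ∑' n : ℕ, conjBaileyDelta q x n * baileyKernel q 0 n r =
      qPochInf q (x * q) * qPochInf q (q / x) / qPochInf q q ^ 2 *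
        (q ^ r / ((1 - x * q ^ r) * (1 - q ^ r / x))) := by
  have hsum : Summable fun n : ℕ ↦ conjBaileyDelta q x n * baileyKernel q 0 n r := by
    obtain ⟨C, hC⟩ := exists_norm_baileyKernel_le hq1 0
    exact .of_norm_bounded ((summable_norm_conjBaileyDelta hq1 x).mul_right C)
      fun n ↦ norm_mul_le_of_le le_rfl (hC _ _)
  have hpartial := (hsum.tendsto_sum_tsum_nat.comp (tendsto_add_atTop_nat 1)).const_mul
    ((1 - x * q ^ r) * (1 - q ^ r / x))
  have hlim := (((tendsto_qPoch hq1 (x * q)).mul (tendsto_qPoch hq1 (q / x))).mul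
    (tendsto_baileyKernel hq1 0 r)).mul_const
    (q ^ r)
  simp only [Function.comp_def, sum_conjBaileyDelta_mul_baileyKernel
    (not_isOfFinOrder_of_norm_lt_one hq1) hq0 hx hr] at hpartial
  have heq := tendsto_nhds_unique hpartial hlim
  refine mul_left_cancel₀ (mul_ne_zero h h') (heq.trans ?_)
  rw [mul_left_comm (_ * _) (_ / _), ← mul_div_assoc (_ * _),
    mul_div_cancel_left₀ _ (mul_ne_zero h h'), div_eq_mul_inv (_ * _) (_ ^ 2)]

end ConjugateBailey

section Tuples

variable {q : ℂ}

/-- The last entry of a tuple, and zero for the empty tuple. -/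
def lastEntry : {i : ℕ} → (Fin i → ℕ) → ℕ
  | 0, _ => 0
  | i + 1, K => K (Fin.last i)

/-- The product of the Gaussian binomial coefficients joining consecutive entries `k` of a tuple
and of the powers `q^(k²)` of all entries but the last one. -/
noncomputable def tupleWeight (q : ℂ) (m : ℕ) : {i : ℕ} → (Fin i → ℕ) → ℂ
  | 0, _ => 1
  | i + 1, K => tupleWeight q m (Fin.init K) * q ^ lastEntry (Fin.init K) ^ 2 *
      stepWeight q m i (lastEntry (Fin.init K)) (∑ a, Fin.init K a) (K (Fin.last i))

theorem tupleWeight_succ (q : ℂ) (m : ℕ) {i : ℕ} (K : Fin (i + 1) → ℕ) :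
    tupleWeight q m K = tupleWeight q m (Fin.init K) * q ^ lastEntry (Fin.init K) ^ 2 *
      stepWeight q m i (lastEntry (Fin.init K)) (∑ a, Fin.init K a) (K (Fin.last i)) := rfl

theorem lastEntry_init {i : ℕ} (K : Fin (i + 2) → ℕ) :
    lastEntry (Fin.init K : Fin (i + 1) → ℕ) = K (Fin.last i).castSucc := rfl

theorem tupleWeight_snoc (q : ℂ) (m : ℕ) {i : ℕ} (K : Fin i → ℕ) (k : ℕ) :
    tupleWeight q m (Fin.snoc K k : Fin (i + 1) → ℕ) =
      tupleWeight q m K * q ^ lastEntry K ^ 2 *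
        stepWeight q m i (lastEntry K) (∑ a, K a) k := by
  rw [tupleWeight_succ, Fin.init_snoc, Fin.snoc_last]

theorem sum_piFinset_snoc (s : Finset ℕ) (i : ℕ) (F : (Fin (i + 1) → ℕ) → ℂ) :
    ∑ K ∈ Fintype.piFinset fun _ : Fin (i + 1) ↦ s, F K =
      ∑ K ∈ Fintype.piFinset fun _ : Fin i ↦ s, ∑ k ∈ s, F (Fin.snoc K k) := by
  rw [sum_comm, ← sum_product']
  refine (sum_equiv (Fin.snocEquiv fun _ : Fin (i + 1) ↦ ℕ) (fun p ↦ ?_) fun p _ ↦ rfl).symm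
  simp [Fintype.mem_piFinset, Fin.forall_fin_succ', Fin.snocEquiv, and_comm]

theorem nestedSum_eq_sum_tupleWeight (q : ℂ) (m M i : ℕ) (h : ℕ → ℕ → ℂ) :
    nestedSum q m M i h = ∑ K ∈ Fintype.piFinset fun _ : Fin i ↦ range (M + 1),
      tupleWeight q m K * q ^ lastEntry K ^ 2 * h (lastEntry K) (∑ a, K a) := by
  induction i generalizing h with
  | zero => simp [nestedSum_zero, tupleWeight, lastEntry]
  | succ i ih =>
    rw [nestedSum_succ, ih, sum_piFinset_snoc]
    refine sum_congr rfl fun K _ ↦ ?_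
    rw [nestedStep_apply, mul_sum]
    refine sum_congr rfl fun k _ ↦ ?_
    simp only [tupleWeight_snoc, lastEntry, Fin.snoc_last, Fin.sum_univ_castSucc,
      Fin.snoc_castSucc]
    ring

/-- The constraint on the tuples in the sum defining `U_t^{(m)}`. -/
def IsAdmissible (m : ℕ) {t : ℕ} (K : Fin (t + 1) → ℕ) : Prop :=
  (∀ i : Fin t, K i.castSucc ≤ K i.succ) ∧ ∀ a : Fin (t + 1), (a : ℕ) = m → 1 ≤ K a

namespace IsAdmissible

variable {m t : ℕ}

theorem iff_init {K : Fin (t + 2) → ℕ} :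
    IsAdmissible m K ↔ IsAdmissible m (Fin.init K : Fin (t + 1) → ℕ) ∧
      K (Fin.last t).castSucc ≤ K (Fin.last (t + 1)) ∧
      (t + 1 = m → 1 ≤ K (Fin.last (t + 1))) := by
  simp only [IsAdmissible, Fin.forall_fin_succ' (n := t), Fin.forall_fin_succ' (n := t + 1),
    Fin.init, Fin.succ_last, Fin.val_castSucc, Fin.val_last, ← Fin.succ_castSucc]
  tauto

theorem le_last {K : Fin (t + 1) → ℕ} (h : IsAdmissible m K) (a : Fin (t + 1)) :
    K a ≤ K (Fin.last t) :=
  Fin.monotone_iff_le_succ.2 h.1 a.le_last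

theorem one_le_last {K : Fin (t + 1) → ℕ} (h : IsAdmissible m K) (hmt : m ≤ t) :
    1 ≤ K (Fin.last t) :=
  (h.2 ⟨m, by omega⟩ rfl).trans (h.le_last _)

theorem sub_le_sum {K : Fin (t + 1) → ℕ} (h : IsAdmissible m K) : t + 1 - m ≤ ∑ a, K a := by
  induction t with
  | zero =>
    rcases m with _ | m
    · simpa using h.one_le_last le_rfl
    · simp
  | succ t ih =>
    have hinit := ih (iff_init.1 h).1
    rw [Fin.sum_univ_castSucc]
    change _ ≤ ∑ a, Fin.init K a + _
    obtain hmt | hmt := le_or_gt m (t + 1)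
    · have := h.one_le_last hmt
      omega
    · omega

end IsAdmissible

theorem qBinom_eq_qMultichoose (q : ℂ) (i : ℕ) {s : ℕ} (hs : 1 ≤ s) :
    qBinom q (i + s - 1) i = qMultichoose q i s := by
  rw [qBinom, if_pos (by omega), Int.toNat_natCast, prod_div_distrib, qMultichoose,
    invQPoch_natCast, qPoch, qPoch, div_eq_mul_inv]
  congr! 3 with j _ j _
  · rw [← pow_add, ← zpow_natCast]
    congr 2
    push_cast
    ring
  · rw [← pow_succ', ← zpow_natCast]
    push_cast
    rfl

theorem sum_ite_lt_one_zero (m i : ℕ) :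
    ∑ j : Fin i, (if (j : ℕ) < m then (1 : ℤ) else 0) = min i m := by
  induction i with
  | zero => simp
  | succ i ih =>
    simp only [Fin.sum_univ_castSucc, Fin.val_castSucc, ih, Fin.val_last]
    split_ifs <;> omega

theorem UtProdM_succ (q : ℂ) (t m : ℕ) (K : Fin (t + 2) → ℕ) :
    UtProdM q (t + 1) m K = UtProdM q t m (Fin.init K) *
      (q ^ K (Fin.last t).castSucc ^ 2 *
        qBinom q (K (Fin.last (t + 1)) - K (Fin.last t).castSucc - (t + 1) +
            (2 * (∑ a, Fin.init K a : ℕ) + min (t + 1) m))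
          (K (Fin.last (t + 1)) - K (Fin.last t).castSucc)) := by
  have hsum (i : Fin (t + 1)) :
      ∑ j ∈ univ.filter (fun j : Fin (t + 2) ↦ (j : ℕ) ≤ i),
          (2 * (K j : ℤ) + if (j : ℕ) < m then 1 else 0) =
        ∑ j ∈ univ.filter (fun j : Fin (t + 1) ↦ (j : ℕ) ≤ i),
          (2 * (K j.castSucc : ℤ) + if (j : ℕ) < m then 1 else 0) := by
    rw [sum_filter, sum_filter, Fin.sum_univ_castSucc, if_neg (by simp; omega), add_zero]
    rfl
  have hlast : univ.filter (fun j : Fin (t + 1) ↦ (j : ℕ) ≤ Fin.last t) = univ :=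
    filter_true_of_mem fun j _ ↦ Fin.le_last j
  rw [UtProdM, Fin.prod_univ_castSucc]
  refine congr_arg₂ (· * ·) (prod_congr rfl fun i _ ↦ ?_) ?_
  · rw [hsum]
    rfl
  · rw [hsum, hlast, sum_add_distrib, sum_ite_lt_one_zero, ← mul_sum]
    push_cast
    rfl

theorem stepWeight_eq_ite (q : ℂ) (m i l S k : ℕ) :
    stepWeight q m i l S k =
      if l ≤ k ∧ (i = m → 1 ≤ k) then qMultichoose q (k - l) (multichooseParam m i S) else 0 := by
  simp only [stepWeight, PowerSeries.coeff_X_pow_mul', qMultichooseSeries, PowerSeries.coeff_mk]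
  split_ifs <;> first | rfl | omega

open Classical in
theorem tupleWeight_eq_ite (hq : ¬ IsOfFinOrder q) (m : ℕ) {t : ℕ} (K : Fin (t + 1) → ℕ) :
    tupleWeight q m K = if IsAdmissible m K then UtProdM q t m K else 0 := by
  induction t with
  | zero =>
    have hadm : IsAdmissible m K ↔ (0 = m → 1 ≤ K 0) := by simp [IsAdmissible]
    simp [tupleWeight, lastEntry, UtProdM, stepWeight_eq_ite, multichooseParam,
      qMultichoose_one_right hq, hadm]
  | succ t ih =>
    have hiff := IsAdmissible.iff_init (m := m) (K := K)
    rw [tupleWeight_succ, ih, stepWeight_eq_ite, lastEntry_init]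
    by_cases hK : IsAdmissible m K
    · obtain ⟨hinit, hchain⟩ := hiff.1 hK
      have hS := hinit.sub_le_sum
      rw [if_pos hinit, if_pos hchain, if_pos hK, UtProdM_succ, mul_assoc,
        ← qBinom_eq_qMultichoose q _ (by unfold multichooseParam; omega)]
      congr 3
      · unfold multichooseParam; omega
      · omega
    · rw [if_neg hK]
      obtain hinit | hchain := not_and_or.1 (hiff.not.1 hK)
      · rw [if_neg hinit, zero_mul, zero_mul]
      · rw [if_neg hchain, mul_zero]

end Tuples

section Multisum

variable {q : ℂ}

theorem summable_fin_prod {β : Type*} {f : β → ℝ} (hf0 : 0 ≤ f) (hf : Summable f) (n : ℕ) :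
    Summable fun K : Fin n → β ↦ ∏ a, f (K a) := by
  induction n with
  | zero => exact Summable.of_finite
  | succ n ih =>
    rw [← (Fin.consEquiv fun _ ↦ β).summable_iff]
    refine (hf.mul_of_nonneg ih hf0 fun K ↦ prod_nonneg fun a _ ↦ hf0 _).congr fun p ↦ ?_
    simp [Fin.prod_univ_succ, Fin.consEquiv]

theorem norm_tupleWeight_mul_pow_le {m : ℕ} (hq1 : ‖q‖ ≤ 1) {C : ℝ}
    (hC : ∀ i l S k, ‖stepWeight q m i l S k‖ ≤ C) {i : ℕ} (K : Fin i → ℕ) :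
    ‖tupleWeight q m K * q ^ lastEntry K ^ 2‖ ≤ C ^ i * ∏ a, ‖q‖ ^ K a := by
  induction i with
  | zero => simp [tupleWeight, lastEntry]
  | succ i ih =>
    have hlast : ‖q ^ lastEntry K ^ 2‖ ≤ ‖q‖ ^ K (Fin.last i) := by
      rw [norm_pow]
      exact pow_le_pow_of_le_one (norm_nonneg q) hq1 (Nat.le_self_pow two_ne_zero _)
    calc ‖tupleWeight q m K * q ^ lastEntry K ^ 2‖
        ≤ (C ^ i * ∏ a, ‖q‖ ^ Fin.init K a) * C * ‖q‖ ^ K (Fin.last i) :=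
          norm_mul_le_of_le (norm_mul_le_of_le (ih _) (hC _ _ _ _)) hlast
      _ = C ^ (i + 1) * ∏ a, ‖q‖ ^ K a := by
          rw [Fin.prod_univ_castSucc]
          simp only [Fin.init]
          ring

/-- The summand of the multisum `U_t^{(m)}`, as a function on all tuples that vanishes off the
admissible ones. -/
noncomputable def multisumTerm (q x : ℂ) (m : ℕ) {t : ℕ} (K : Fin (t + 1) → ℕ) : ℂ :=
  conjBaileyDelta q x (K (Fin.last t)) * tupleWeight q m K

theorem multisumTerm_snoc (q x : ℂ) (m : ℕ) {t : ℕ} (K : Fin t → ℕ) (n : ℕ) :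
    multisumTerm q x m (Fin.snoc K n : Fin (t + 1) → ℕ) =
      conjBaileyDelta q x n * tupleWeight q m (Fin.snoc K n : Fin (t + 1) → ℕ) := by
  rw [multisumTerm, Fin.snoc_last]

theorem indicator_UtTermM (hq : ¬ IsOfFinOrder q) (x : ℂ) (t m : ℕ) :
    {K | IsAdmissible m K}.indicator (UtTermM q x t m) = multisumTerm q x m := by
  classical
  funext K
  rw [Set.indicator_apply, multisumTerm, tupleWeight_eq_ite hq, mul_ite, mul_zero]
  rfl

theorem summable_norm_multisumTerm (hq1 : ‖q‖ < 1) (x : ℂ) (m t : ℕ) :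
    Summable fun K : Fin (t + 1) → ℕ ↦ ‖multisumTerm q x m K‖ := by
  obtain ⟨A, hA⟩ := exists_norm_conjBaileyDelta_le hq1 x
  obtain ⟨C, hC⟩ := exists_norm_stepWeight_le hq1
  have hprod := summable_fin_prod (fun n ↦ pow_nonneg (norm_nonneg q) n)
    (summable_geometric_of_lt_one (norm_nonneg q) hq1) (t + 1)
  refine .of_nonneg_of_le (fun _ ↦ norm_nonneg _) (fun K ↦ ?_) (hprod.mul_left (A * C ^ (t + 1)))
  calc ‖multisumTerm q x m K‖
      ≤ A * ‖q‖ ^ K (Fin.last t) * ((C ^ t * ∏ a, ‖q‖ ^ Fin.init K a) * C) :=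
        norm_mul_le_of_le (hA _) (norm_mul_le_of_le
          (norm_tupleWeight_mul_pow_le hq1.le (fun i ↦ hC m i) _) (hC _ _ _ _ _))
    _ = A * C ^ (t + 1) * ∏ a, ‖q‖ ^ K a := by
        rw [Fin.prod_univ_castSucc]
        simp only [Fin.init]
        ring

theorem isAdmissible_of_tupleWeight_ne_zero (hq : ¬ IsOfFinOrder q) {m t : ℕ}
    {K : Fin (t + 1) → ℕ} (h : tupleWeight q m K ≠ 0) : IsAdmissible m K := by
  classical
  rw [tupleWeight_eq_ite hq] at h
  exact (ite_ne_right_iff.1 h).1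

theorem tsum_tupleWeight_snoc (hq : ¬ IsOfFinOrder q) (hq0 : q ≠ 0) (m d n : ℕ) :
    ∑' K : Fin (m + d) → ℕ, tupleWeight q m (Fin.snoc K n : Fin (m + d + 1) → ℕ) =
      ∑' j : ℕ, heckeCoeff q (m + d) d (j + 1) * (q ^ ((j : ℤ) + 1) - q ^ (-((j : ℤ) + 1))) *
        baileyKernel q 0 n (j + 1) := by
  obtain rfl | hn := eq_or_ne n 0
  · have hright (j : ℕ) : baileyKernel q 0 (0 : ℕ) (j + 1) = 0 := baileyKernel_of_lt q 0 (by omega)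
    have hleft (K : Fin (m + d) → ℕ) :
        tupleWeight q m (Fin.snoc K 0 : Fin (m + d + 1) → ℕ) = 0 := by
      by_contra h
      have hlast := (isAdmissible_of_tupleWeight_ne_zero hq h).one_le_last (m.le_add_right d)
      rw [Fin.snoc_last] at hlast
      omega
    simp only [hleft, hright, mul_zero, tsum_zero]
  · rw [← nestedSum_stepWeight_eq_tsum hq hq0 m d hn, nestedSum_eq_sum_tupleWeight]
    simp only [← tupleWeight_snoc]
    refine tsum_eq_sum fun K hK ↦ ?_
    contrapose! hK
    have hadm := isAdmissible_of_tupleWeight_ne_zero hq hK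
    refine Fintype.mem_piFinset.2 fun a ↦ mem_range_succ_iff.2 ?_
    simpa only [Fin.snoc_castSucc, Fin.snoc_last] using hadm.le_last a.castSucc

theorem tsum_multisumTerm (hq0 : q ≠ 0) (hq1 : ‖q‖ < 1) (x : ℂ) (m d : ℕ) :
    ∑' K : Fin (m + d + 1) → ℕ, multisumTerm q x m K =
      ∑' n : ℕ, conjBaileyDelta q x n * ∑' j : ℕ, heckeCoeff q (m + d) d (j + 1) *
        (q ^ ((j : ℤ) + 1) - q ^ (-((j : ℤ) + 1))) * baileyKernel q 0 n (j + 1) := by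
  have hq := not_isOfFinOrder_of_norm_lt_one hq1
  let e := Fin.snocEquiv fun _ : Fin (m + d + 1) ↦ ℕ
  have hsum : Summable fun p ↦ multisumTerm q x m (e p) :=
    e.summable_iff.2 (summable_norm_multisumTerm hq1 x m (m + d)).of_norm
  rw [← e.tsum_eq, hsum.tsum_prod]
  refine tsum_congr fun n ↦ ?_
  rw [← tsum_tupleWeight_snoc hq hq0, ← tsum_mul_left]
  exact tsum_congr fun K ↦ multisumTerm_snoc q x m K n

theorem isAdmissible_eq {m t : ℕ} (hmt : m ≤ t) :
    IsAdmissible m = fun K : Fin (t + 1) → ℕ ↦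
      (∀ i : Fin t, K i.castSucc ≤ K i.succ) ∧ 1 ≤ K ⟨m, by omega⟩ :=
  funext fun _ ↦ propext <| and_congr_right fun _ ↦
    ⟨fun h ↦ h _ rfl, fun h a ha ↦ by rwa [Fin.ext (b := ⟨m, _⟩) ha]⟩

theorem summable_norm_UtTermM (hq1 : ‖q‖ < 1) (x : ℂ) (t m : ℕ) :
    Summable fun K : {K : Fin (t + 1) → ℕ // IsAdmissible m K} ↦ ‖UtTermM q x t m K‖ := by
  have hsum := (summable_norm_multisumTerm hq1 x m t).of_norm
  rw [← indicator_UtTermM (not_isOfFinOrder_of_norm_lt_one hq1),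
    ← summable_subtype_iff_indicator] at hsum
  exact hsum.norm

theorem tsum_UtTermM (hq0 : q ≠ 0) (hq1 : ‖q‖ < 1) (x : ℂ) (m d : ℕ) :
    ∑' K : {K : Fin (m + d + 1) → ℕ // IsAdmissible m K}, UtTermM q x (m + d) m K =
      ∑' n : ℕ, conjBaileyDelta q x n * ∑' j : ℕ, heckeCoeff q (m + d) d (j + 1) *
        (q ^ ((j : ℤ) + 1) - q ^ (-((j : ℤ) + 1))) * baileyKernel q 0 n (j + 1) := by
  rw [← tsum_multisumTerm hq0 hq1, ← indicator_UtTermM (not_isOfFinOrder_of_norm_lt_one hq1)]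
  exact tsum_subtype {K | IsAdmissible m K} (UtTermM q x (m + d) m)

end Multisum

section Hecke

variable {q : ℂ}

theorem norm_heckeMonomial_le (hq0 : q ≠ 0) (hq1 : ‖q‖ < 1) {t d : ℕ} (hd : d ≤ t) {n r : ℤ}
    (hr : r ∈ Ico (-n) n) : ‖heckeMonomial q t d n r‖ ≤ ‖q‖ ^ (3 * n - 3) := by
  obtain ⟨hnr, hrn⟩ := mem_Ico.1 hr
  have hpos : 0 < ‖q‖ := norm_pos_iff.2 hq0
  rw [heckeMonomial, unitBailey, norm_mul, norm_mul, norm_zpow, norm_zpow, norm_zpow, norm_neg,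
    norm_one, one_zpow, one_mul, ← zpow_add₀ hpos.ne']
  refine zpow_le_zpow_right_of_le_one₀ hpos hq1.le ?_
  have hc : 2 * (r * (r - 1) / 2) = r * (r - 1) :=
    Int.mul_ediv_cancel' (Int.even_mul_pred_self r).two_dvd
  have hd' : (d : ℤ) ≤ t := by exact_mod_cast hd
  have hquad : 0 ≤ (2 * (t : ℤ) + 3) * ((r + n) * (n - 1 - r)) :=
    mul_nonneg (by positivity) (mul_nonneg (by omega) (by omega))
  have hlin : 0 ≤ (2 * (t : ℤ) + 2) * (n + r) - 2 * d * r := by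
    obtain h | h := le_or_gt r 0
    · nlinarith [mul_nonneg d.cast_nonneg (neg_nonneg.2 h)]
    · nlinarith [mul_nonneg (sub_nonneg.2 hd') h.le]
  have hn : 0 ≤ (n - 2) * (n - 3) := by
    obtain h | h := le_or_gt n 2 <;> nlinarith
  nlinarith

/-- The index set of the Hecke-type double sums in the coordinates `(ν, j)`, where `ν = N + 1`,
`r - s - 1 = 2 * j` and `r + s + 1 = ± 2 * ν`. -/
abbrev HeckeIndex := Σ N : ℕ, {j : ℤ // j ∈ Ico (-((N : ℤ) + 1)) (N + 1)}

namespace HeckeIndex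

theorem ext {a b : HeckeIndex} (h₁ : a.1 = b.1) (h₂ : a.2.1 = b.2.1) : a = b := by
  obtain ⟨N, j, hj⟩ := a
  obtain ⟨N', j', hj'⟩ := b
  obtain rfl : N = N' := h₁
  obtain rfl : j = j' := h₂
  rfl

/-- The coordinates `(ν, j)` on the nonnegative quadrant. -/
def equivNonneg : HeckeIndex ≃ {p : ℤ × ℤ // (0 ≤ p.1 ∧ 0 ≤ p.2) ∧ p.1 % 2 ≠ p.2 % 2} where
  toFun a := ⟨((a.1 + 1 : ℤ) + a.2.1, (a.1 + 1 : ℤ) - 1 - a.2.1), by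
    have := mem_Ico.1 a.2.2
    dsimp only
    omega⟩
  invFun p := ⟨((p.1.1 + p.1.2 - 1) / 2).toNat, (p.1.1 - p.1.2 - 1) / 2, by
    have := p.2
    rw [mem_Ico]
    omega⟩
  left_inv a := by apply HeckeIndex.ext <;> dsimp only <;> omega
  right_inv p := by
    have := p.2
    ext <;> dsimp only <;> omega

/-- The coordinates `(ν, j)` on the negative quadrant. -/
def equivNeg : HeckeIndex ≃ {p : ℤ × ℤ // (p.1 < 0 ∧ p.2 < 0) ∧ p.1 % 2 ≠ p.2 % 2} where
  toFun a := ⟨(-(a.1 + 1 : ℤ) + a.2.1, -(a.1 + 1 : ℤ) - 1 - a.2.1), by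
    have := mem_Ico.1 a.2.2
    dsimp only
    omega⟩
  invFun p := ⟨((-p.1.1 - p.1.2 - 3) / 2).toNat, (p.1.1 - p.1.2 - 1) / 2, by
    have := p.2
    rw [mem_Ico]
    omega⟩
  left_inv a := by apply HeckeIndex.ext <;> dsimp only <;> omega
  right_inv p := by
    have := p.2
    ext <;> dsimp only <;> omega

end HeckeIndex

theorem summable_norm_heckeMonomial_mul (hq0 : q ≠ 0) (hq1 : ‖q‖ < 1) {t d : ℕ} (hd : d ≤ t)
    {g : ℕ → ℂ} {B : ℝ} (hg : ∀ N : ℕ, ‖g N‖ ≤ B * ‖q‖ ^ (-((N : ℤ) + 1))) :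
    Summable fun a : HeckeIndex ↦ ‖heckeMonomial q t d (a.1 + 1) a.2.1 * g a.1‖ := by
  have hpos : 0 < ‖q‖ := norm_pos_iff.2 hq0
  have hbound (N : ℕ) (j : ℤ) (hj : j ∈ Ico (-((N : ℤ) + 1)) (N + 1)) :
      ‖heckeMonomial q t d (N + 1) j * g N‖ ≤ B * ‖q‖ ^ (-2 : ℤ) * ‖q‖ ^ (N + 1) := by
    have hB : 0 ≤ B := nonneg_of_mul_nonneg_left ((norm_nonneg _).trans (hg 0)) (by positivity)
    calc ‖heckeMonomial q t d (N + 1) j * g N‖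
        ≤ ‖q‖ ^ (3 * ((N : ℤ) + 1) - 3) * (B * ‖q‖ ^ (-((N : ℤ) + 1))) :=
          norm_mul_le_of_le (norm_heckeMonomial_le hq0 hq1 hd hj) (hg N)
      _ = B * ‖q‖ ^ (2 * (N : ℤ) - 1) := by
          rw [mul_left_comm, ← zpow_add₀ hpos.ne']
          ring_nf
      _ ≤ B * ‖q‖ ^ ((N : ℤ) - 1) := by
          gcongr B * ?_
          exact zpow_le_zpow_right_of_le_one₀ hpos hq1.le (by omega)
      _ = B * ‖q‖ ^ (-2 : ℤ) * ‖q‖ ^ (N + 1) := by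
          rw [mul_assoc, ← zpow_natCast, ← zpow_add₀ hpos.ne']
          push_cast
          ring_nf
  have hgeom := summable_pow_mul_geometric_of_norm_lt_one 1 (r := ‖q‖) (by rwa [norm_norm])
  refine (summable_sigma_of_nonneg fun _ ↦ norm_nonneg _).2 ⟨fun N ↦ .of_finite, ?_⟩
  refine .of_nonneg_of_le (fun _ ↦ tsum_nonneg fun _ ↦ norm_nonneg _) (fun N ↦ ?_)
    (((summable_nat_add_iff 1).2 hgeom).mul_left (2 * (B * ‖q‖ ^ (-2 : ℤ))))
  refine (Finset.tsum_subtype _ fun j ↦ ‖heckeMonomial q t d (N + 1) j * g N‖).trans_le ?_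
  refine (sum_le_card_nsmul _ _ _ (hbound N)).trans_eq ?_
  rw [Int.card_Ico, show ((N : ℤ) + 1 - -((N : ℤ) + 1)).toNat = 2 * (N + 1) by omega, nsmul_eq_mul]
  push_cast
  ring

theorem tsum_heckeMonomial_mul_fiber (q : ℂ) (t d N : ℕ) (g : ℕ → ℂ) :
    ∑' j : {j : ℤ // j ∈ Ico (-((N : ℤ) + 1)) (N + 1)}, heckeMonomial q t d (N + 1) j * g N =
      heckeCoeff q t d (N + 1) * g N := by
  rw [heckeCoeff, sum_mul, ← Finset.tsum_subtype]

theorem summable_heckeCoeff_mul (hq0 : q ≠ 0) (hq1 : ‖q‖ < 1) {t d : ℕ} (hd : d ≤ t)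
    {g : ℕ → ℂ} {B : ℝ} (hg : ∀ N : ℕ, ‖g N‖ ≤ B * ‖q‖ ^ (-((N : ℤ) + 1))) :
    Summable fun N : ℕ ↦ heckeCoeff q t d (N + 1) * g N := by
  simp only [← tsum_heckeMonomial_mul_fiber]
  exact (summable_norm_heckeMonomial_mul hq0 hq1 hd hg).of_norm.sigma

theorem tsum_heckeMonomial_mul (hq0 : q ≠ 0) (hq1 : ‖q‖ < 1) {t d : ℕ} (hd : d ≤ t)
    {g : ℕ → ℂ} {B : ℝ} (hg : ∀ N : ℕ, ‖g N‖ ≤ B * ‖q‖ ^ (-((N : ℤ) + 1))) :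
    ∑' a : HeckeIndex, heckeMonomial q t d (a.1 + 1) a.2.1 * g a.1 =
      ∑' N : ℕ, heckeCoeff q t d (N + 1) * g N := by
  simp only [(summable_norm_heckeMonomial_mul hq0 hq1 hd hg).of_norm.tsum_sigma,
    tsum_heckeMonomial_mul_fiber]

theorem heckeTermM_eq_heckeMonomial (hq0 : q ≠ 0) (x : ℂ) (m d : ℕ) (ν j : ℤ) :
    heckeTermM q x ((m + d : ℕ) + 1) (m + 1) (ν + j, ν - 1 - j) =
      q ^ (-((m + d : ℕ) : ℤ) - 1) * (heckeMonomial q (m + d) d ν j * (1 - x * q ^ ν)⁻¹) := by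
  have hc : 2 * (j * (j - 1) / 2) = j * (j - 1) :=
    Int.mul_ediv_cancel' (Int.even_mul_pred_self j).two_dvd
  have hdiff : (ν + j - (ν - 1 - j) - 1) / 2 = j := by omega
  have hsum : (ν + j + (ν - 1 - j) + 1) / 2 = ν := by omega
  have hexp : ((ν + j) ^ 2 + (ν - 1 - j) ^ 2 +
      2 * (4 * (((m + d : ℕ) : ℤ) + 1) + 3) * (ν + j) * (ν - 1 - j) +
      4 * (1 + ((m : ℤ) + 1) + (((m + d : ℕ) : ℤ) + 1)) * (ν + j) +
      4 * (1 - ((m : ℤ) + 1) + (((m + d : ℕ) : ℤ) + 1)) * (ν - 1 - j) -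
      4 * (((m + d : ℕ) : ℤ) + 1) - 4 * ((m : ℤ) + 1) + 3) / 8 =
      (-((m + d : ℕ) : ℤ) - 1) + ((((m + d : ℕ) : ℤ) + 2) * (ν ^ 2 - j ^ 2) - d * j) +
        j * (j - 1) / 2 := by
    refine Int.ediv_eq_of_eq_mul_right (by norm_num) ?_
    push_cast
    linear_combination -4 * hc
  simp only [heckeTermM]
  rw [hdiff, hsum, hexp, zpow_add₀ hq0, zpow_add₀ hq0, heckeMonomial, unitBailey, div_eq_mul_inv]
  ring

theorem exists_norm_inv_one_sub_mul_pow_le (hq1 : ‖q‖ < 1) (a : ℂ) :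
    ∃ B, ∀ n : ℕ, ‖(1 - a * q ^ n)⁻¹‖ ≤ B := by
  have hlim : Filter.Tendsto (fun n : ℕ ↦ (1 - a * q ^ n)⁻¹) Filter.atTop
      (nhds (1 - a * 0)⁻¹) :=
    (((tendsto_pow_atTop_nhds_zero_of_norm_lt_one hq1).const_mul a).const_sub 1).inv₀ (by simp)
  obtain ⟨B, hB⟩ := (Metric.isBounded_range_of_tendsto _ hlim).exists_norm_le
  exact ⟨B, fun n ↦ hB _ ⟨n, rfl⟩⟩

theorem exists_norm_inv_one_sub_mul_zpow_neg_le (hq0 : q ≠ 0) (hq1 : ‖q‖ < 1) {x : ℂ}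
    (hx : x ≠ 0) : ∃ B, ∀ n : ℕ, ‖(1 - x * q ^ (-(n : ℤ)))⁻¹‖ ≤ B := by
  obtain ⟨B, hB⟩ := exists_norm_inv_one_sub_mul_pow_le hq1 x⁻¹
  refine ⟨‖x⁻¹‖ * 1 * B, fun n ↦ ?_⟩
  have heq : (1 - x * q ^ (-(n : ℤ)))⁻¹ = -(x⁻¹ * q ^ n) * (1 - x⁻¹ * q ^ n)⁻¹ := by
    have hqn := pow_ne_zero n hq0
    have hfactor : 1 - x * (q ^ n)⁻¹ = -(x⁻¹ * q ^ n)⁻¹ * (1 - x⁻¹ * q ^ n) := by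
      field_simp
      ring
    rw [zpow_neg, zpow_natCast, hfactor, mul_inv, inv_neg, inv_inv]
  have hpow : ‖q ^ n‖ ≤ 1 := (norm_pow q n).trans_le (pow_le_one₀ (norm_nonneg q) hq1.le)
  rw [heq]
  refine norm_mul_le_of_le ?_ (hB n)
  rw [norm_neg]
  exact norm_mul_le_of_le le_rfl hpow

theorem exists_norm_le_mul_zpow_neg (hq0 : q ≠ 0) (hq1 : ‖q‖ < 1) {g : ℕ → ℂ}
    (hg : ∃ B, ∀ N, ‖g N‖ ≤ B) : ∃ B, ∀ N : ℕ, ‖g N‖ ≤ B * ‖q‖ ^ (-((N : ℤ) + 1)) := by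
  obtain ⟨B, hB⟩ := hg
  refine ⟨B, fun N ↦ (hB N).trans (le_mul_of_one_le_right ((norm_nonneg _).trans (hB N)) ?_)⟩
  exact one_le_zpow_of_nonpos₀ (norm_pos_iff.2 hq0) hq1.le (by omega : -((N : ℤ) + 1) ≤ 0)

theorem exists_norm_pole_le (hq0 : q ≠ 0) (hq1 : ‖q‖ < 1) (x : ℂ) :
    ∃ B, ∀ N : ℕ, ‖(1 - x * q ^ ((N : ℤ) + 1))⁻¹‖ ≤ B * ‖q‖ ^ (-((N : ℤ) + 1)) := by
  obtain ⟨B, hB⟩ := exists_norm_inv_one_sub_mul_pow_le hq1 x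
  exact exists_norm_le_mul_zpow_neg hq0 hq1 ⟨B, fun N ↦ mod_cast hB (N + 1)⟩

theorem exists_norm_pole_neg_le (hq0 : q ≠ 0) (hq1 : ‖q‖ < 1) {x : ℂ} (hx : x ≠ 0) :
    ∃ B, ∀ N : ℕ, ‖(1 - x * q ^ (-((N : ℤ) + 1)))⁻¹‖ ≤ B * ‖q‖ ^ (-((N : ℤ) + 1)) := by
  obtain ⟨B, hB⟩ := exists_norm_inv_one_sub_mul_zpow_neg_le hq0 hq1 hx
  exact exists_norm_le_mul_zpow_neg hq0 hq1 ⟨B, fun N ↦ mod_cast hB (N + 1)⟩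

theorem norm_zpow_sub_zpow_neg_le (hq0 : q ≠ 0) (hq1 : ‖q‖ < 1) (N : ℕ) :
    ‖q ^ ((N : ℤ) + 1) - q ^ (-((N : ℤ) + 1))‖ ≤ 2 * ‖q‖ ^ (-((N : ℤ) + 1)) := by
  refine (norm_sub_le _ _).trans ?_
  rw [norm_zpow, norm_zpow, two_mul]
  refine add_le_add ?_ le_rfl
  exact zpow_le_zpow_right_of_le_one₀ (norm_pos_iff.2 hq0) hq1.le (by omega)

theorem heckeMonomial_neg (q : ℂ) (t d : ℕ) (n r : ℤ) :
    heckeMonomial q t d (-n) r = heckeMonomial q t d n r := by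
  rw [heckeMonomial, neg_sq, heckeMonomial]

theorem heckeTermM_equivNonneg (hq0 : q ≠ 0) (x : ℂ) (m d : ℕ) (a : HeckeIndex) :
    heckeTermM q x ((m + d : ℕ) + 1) (m + 1) (HeckeIndex.equivNonneg a) =
      q ^ (-((m + d : ℕ) : ℤ) - 1) *
        (heckeMonomial q (m + d) d (a.1 + 1) a.2 * (1 - x * q ^ ((a.1 : ℤ) + 1))⁻¹) :=
  heckeTermM_eq_heckeMonomial hq0 x m d _ _

theorem heckeTermM_equivNeg (hq0 : q ≠ 0) (x : ℂ) (m d : ℕ) (a : HeckeIndex) :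
    heckeTermM q x ((m + d : ℕ) + 1) (m + 1) (HeckeIndex.equivNeg a) =
      q ^ (-((m + d : ℕ) : ℤ) - 1) *
        (heckeMonomial q (m + d) d (a.1 + 1) a.2 * (1 - x * q ^ (-((a.1 : ℤ) + 1)))⁻¹) := by
  rw [← heckeMonomial_neg]
  exact heckeTermM_eq_heckeMonomial hq0 x m d _ _

theorem summable_norm_heckeTermM_nonneg (hq0 : q ≠ 0) (hq1 : ‖q‖ < 1) (x : ℂ) (m d : ℕ) :
    Summable fun p : {p : ℤ × ℤ // (0 ≤ p.1 ∧ 0 ≤ p.2) ∧ p.1 % 2 ≠ p.2 % 2} ↦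
      ‖heckeTermM q x ((m + d : ℕ) + 1) (m + 1) p‖ := by
  obtain ⟨B, hB⟩ := exists_norm_pole_le hq0 hq1 x
  rw [← HeckeIndex.equivNonneg.summable_iff]
  simp only [Function.comp_def, heckeTermM_equivNonneg hq0]
  exact ((summable_norm_heckeMonomial_mul hq0 hq1 (d.le_add_left m) hB).mul_left _).congr
    fun _ ↦ (norm_mul _ _).symm

theorem summable_norm_heckeTermM_neg (hq0 : q ≠ 0) (hq1 : ‖q‖ < 1) {x : ℂ} (hx : x ≠ 0)
    (m d : ℕ) : Summable fun p : {p : ℤ × ℤ // (p.1 < 0 ∧ p.2 < 0) ∧ p.1 % 2 ≠ p.2 % 2} ↦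
      ‖heckeTermM q x ((m + d : ℕ) + 1) (m + 1) p‖ := by
  obtain ⟨B, hB⟩ := exists_norm_pole_neg_le hq0 hq1 hx
  rw [← HeckeIndex.equivNeg.summable_iff]
  simp only [Function.comp_def, heckeTermM_equivNeg hq0]
  exact ((summable_norm_heckeMonomial_mul hq0 hq1 (d.le_add_left m) hB).mul_left _).congr
    fun _ ↦ (norm_mul _ _).symm

theorem tsum_heckeTermM_nonneg (hq0 : q ≠ 0) (hq1 : ‖q‖ < 1) (x : ℂ) (m d : ℕ) :
    ∑' p : {p : ℤ × ℤ // (0 ≤ p.1 ∧ 0 ≤ p.2) ∧ p.1 % 2 ≠ p.2 % 2},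
        heckeTermM q x ((m + d : ℕ) + 1) (m + 1) p =
      q ^ (-((m + d : ℕ) : ℤ) - 1) *
        ∑' N : ℕ, heckeCoeff q (m + d) d (N + 1) * (1 - x * q ^ ((N : ℤ) + 1))⁻¹ := by
  obtain ⟨B, hB⟩ := exists_norm_pole_le hq0 hq1 x
  rw [← HeckeIndex.equivNonneg.tsum_eq]
  simp only [heckeTermM_equivNonneg hq0]
  rw [tsum_mul_left, tsum_heckeMonomial_mul hq0 hq1 (d.le_add_left m) hB]

theorem tsum_heckeTermM_neg (hq0 : q ≠ 0) (hq1 : ‖q‖ < 1) {x : ℂ} (hx : x ≠ 0) (m d : ℕ) :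
    ∑' p : {p : ℤ × ℤ // (p.1 < 0 ∧ p.2 < 0) ∧ p.1 % 2 ≠ p.2 % 2},
        heckeTermM q x ((m + d : ℕ) + 1) (m + 1) p =
      q ^ (-((m + d : ℕ) : ℤ) - 1) *
        ∑' N : ℕ, heckeCoeff q (m + d) d (N + 1) * (1 - x * q ^ (-((N : ℤ) + 1)))⁻¹ := by
  obtain ⟨B, hB⟩ := exists_norm_pole_neg_le hq0 hq1 hx
  rw [← HeckeIndex.equivNeg.tsum_eq]
  simp only [heckeTermM_equivNeg hq0]
  rw [tsum_mul_left, tsum_heckeMonomial_mul hq0 hq1 (d.le_add_left m) hB]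

theorem sub_inv_mul_div_eq_sub {u x : ℂ} (hu : u ≠ 0) (hx : x ≠ 0) (h : 1 - x * u ≠ 0)
    (h' : 1 - u / x ≠ 0) :
    (u - u⁻¹) * (u / ((1 - x * u) * (1 - u / x))) = (1 - x * u⁻¹)⁻¹ - (1 - x * u)⁻¹ := by
  have hux : u - x ≠ 0 := fun h0 ↦ h' (by rw [sub_eq_zero.1 h0, div_self hx, sub_self])
  have hleft : 1 - u / x = -(u - x) / x := by
    field_simp
    ring
  have hright : 1 - x * u⁻¹ = (u - x) / u := by field_simp
  rw [hleft, hright, inv_div]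
  generalize hv : 1 - x * u = v at *
  field_simp
  linear_combination u * hv

theorem tsum_mul_tsum_mul_comm {ι κ : Type*} {δ : ι → ℂ} {c : κ → ℂ} {A : ι → κ → ℂ} {C : ℝ}
    (hδ : Summable fun n ↦ ‖δ n‖) (hc : Summable fun j ↦ ‖c j‖) (hA : ∀ n j, ‖A n j‖ ≤ C) :
    ∑' n, δ n * ∑' j, c j * A n j = ∑' j, c j * ∑' n, δ n * A n j := by
  have hsum : Summable (Function.uncurry fun n j ↦ δ n * (c j * A n j)) := by
    refine .of_norm_bounded
      ((hδ.mul_of_nonneg hc (fun _ ↦ norm_nonneg _) fun _ ↦ norm_nonneg _).mul_right C) ?_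
    rintro ⟨n, j⟩
    rw [Function.uncurry_apply_pair, ← mul_assoc]
    exact norm_mul_le_of_le (norm_mul_le _ _) (hA n j)
  simp only [← tsum_mul_left]
  rw [← hsum.tsum_comm]
  simp only [mul_left_comm]

theorem tsum_UtTermM_eq_tsum_heckeCoeff (hq0 : q ≠ 0) (hq1 : ‖q‖ < 1) {x : ℂ} (hx : x ≠ 0)
    (hxq : ∀ n : ℤ, n ≠ 0 → x * q ^ n ≠ 1) (m d : ℕ) :
    ∑' K : {K : Fin (m + d + 1) → ℕ // IsAdmissible m K}, UtTermM q x (m + d) m K =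
      qPochInf q (x * q) * qPochInf q (q / x) / qPochInf q q ^ 2 *
        ∑' N : ℕ, (heckeCoeff q (m + d) d (N + 1) * (1 - x * q ^ (-((N : ℤ) + 1)))⁻¹ -
          heckeCoeff q (m + d) d (N + 1) * (1 - x * q ^ ((N : ℤ) + 1))⁻¹) := by
  obtain ⟨C, hC⟩ := exists_norm_baileyKernel_le hq1 0
  have hcoeff := (summable_heckeCoeff_mul hq0 hq1 (d.le_add_left m)
    (norm_zpow_sub_zpow_neg_le hq0 hq1)).norm
  rw [tsum_UtTermM hq0 hq1, tsum_mul_tsum_mul_comm (summable_norm_conjBaileyDelta hq1 x) hcoeff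
    fun n j ↦ hC n (j + 1), ← tsum_mul_left]
  refine tsum_congr fun N ↦ ?_
  have hN : (N : ℤ) + 1 ≠ 0 := by omega
  have h : 1 - x * q ^ ((N : ℤ) + 1) ≠ 0 := sub_ne_zero.2 (hxq _ hN).symm
  have h' : 1 - q ^ ((N : ℤ) + 1) / x ≠ 0 := fun h0 ↦ hxq _ (neg_ne_zero.2 hN) <| by
    rw [zpow_neg, (div_eq_one_iff_eq hx).1 (sub_eq_zero.1 h0).symm, mul_inv_cancel₀ hx]
  rw [tsum_conjBaileyDelta_mul_baileyKernel hq0 hq1 hx hN h h', mul_left_comm, mul_assoc,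
    ← mul_sub, zpow_neg, sub_inv_mul_div_eq_sub (zpow_ne_zero _ hq0) hx h h']

end Hecke

/-- Hecke-type expansion of `U_t^{(m)}(-x;q)` (the paper's `t, m` are
`t+1, m+1` here), with absolute convergence of each series. -/
theorem stmt15 (t m : ℕ) (hmt : m ≤ t) (q x : ℂ)
    (hq0 : 0 < ‖q‖) (hq1 : ‖q‖ < 1)
    (hx : x ≠ 0) (hxq : ∀ n : ℤ, n ≠ 0 → x * q ^ n ≠ 1) :
    Summable (fun k : {k : Fin (t+1) → ℕ //
        (∀ i : Fin t, k i.castSucc ≤ k i.succ) ∧ 1 ≤ k ⟨m, by omega⟩} =>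
      ‖UtTermM q x t m k.1‖) ∧
    Summable (fun p : {p : ℤ × ℤ // (0 ≤ p.1 ∧ 0 ≤ p.2) ∧ p.1 % 2 ≠ p.2 % 2} =>
      ‖heckeTermM q x ((t : ℤ) + 1) ((m : ℤ) + 1) p.1‖) ∧
    Summable (fun p : {p : ℤ × ℤ // (p.1 < 0 ∧ p.2 < 0) ∧ p.1 % 2 ≠ p.2 % 2} =>
      ‖heckeTermM q x ((t : ℤ) + 1) ((m : ℤ) + 1) p.1‖) ∧
    q ^ (-(t : ℤ) - 1) *
      ∑' k : {k : Fin (t+1) → ℕ //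
          (∀ i : Fin t, k i.castSucc ≤ k i.succ) ∧ 1 ≤ k ⟨m, by omega⟩},
        UtTermM q x t m k.1 =
    -(qPochInf q (x * q) * qPochInf q (q / x) / (qPochInf q q) ^ 2) *
      ((∑' p : {p : ℤ × ℤ // (0 ≤ p.1 ∧ 0 ≤ p.2) ∧ p.1 % 2 ≠ p.2 % 2},
          heckeTermM q x ((t : ℤ) + 1) ((m : ℤ) + 1) p.1) -
       (∑' p : {p : ℤ × ℤ // (p.1 < 0 ∧ p.2 < 0) ∧ p.1 % 2 ≠ p.2 % 2},
          heckeTermM q x ((t : ℤ) + 1) ((m : ℤ) + 1) p.1)) := by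
  have hq0 : q ≠ 0 := norm_pos_iff.1 hq0
  rw [← isAdmissible_eq hmt]
  obtain ⟨d, rfl⟩ := Nat.exists_eq_add_of_le hmt
  refine ⟨summable_norm_UtTermM hq1 x _ m, summable_norm_heckeTermM_nonneg hq0 hq1 x m d,
    summable_norm_heckeTermM_neg hq0 hq1 hx m d, ?_⟩
  obtain ⟨B, hB⟩ := exists_norm_pole_le hq0 hq1 x
  obtain ⟨B', hB'⟩ := exists_norm_pole_neg_le hq0 hq1 hx
  have hpos := summable_heckeCoeff_mul hq0 hq1 (d.le_add_left m) hB
  have hneg := summable_heckeCoeff_mul hq0 hq1 (d.le_add_left m) hB'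
  rw [tsum_UtTermM_eq_tsum_heckeCoeff hq0 hq1 hx hxq, hneg.tsum_sub hpos,
    tsum_heckeTermM_nonneg hq0 hq1, tsum_heckeTermM_neg hq0 hq1 hx]
  ring
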